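/- arXiv:2402.10282 — 3 statements merged into one kernel-verified Lean document; each statement's English description precedes it below -/
import Mathlib

section
/- In the two-policy mediator feedback problem with Θ = {θ₁, θ₂}, for any algorithm and any horizon T ≥ 1/(8 log(4/3) H²(θ₁,θ₂)), there exists a sequence of losses such that the regret satisfies R_T ≥ (1/(13√2))·√(C(θ₁,θ₂) T), where C(θ₁,θ₂) is the chi-squared capacity of the pair. -/
open Finset

noncomputable section

/-- The history (policy, outcome, observed loss) available before round `t`, given the
realized loss sequence `L` (Boolean losses) and the sequence `h` of (policy, outcome)
pairs. -/
def medHist {ι X : Type*} {T : ℕ} (L : Fin T → X → Bool) (h : Fin T → ι × X)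
    (t : ℕ) : List (ι × X × ℝ) :=
  (List.ofFn fun s : Fin T =>
      ((h s).1, (h s).2, if L s (h s).2 then (1 : ℝ) else 0)).take t

/-- The conditional probability of the (policy, outcome) sequence `h` given the loss
sequence `L`, when the learner plays strategy `alg` (a distribution over policies given
the observed history) and, after choosing a policy, an outcome is drawn from the chosen
policy's distribution `θ`. -/
def medProb {ι X : Type*} [Fintype ι] [Fintype X] {T : ℕ}
    (alg : ℕ → List (ι × X × ℝ) → ι → ℝ) (θ : ι → X → ℝ)
    (L : Fin T → X → Bool) (h : Fin T → ι × X) : ℝ :=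
  ∏ t : Fin T, alg t (medHist L h t) (h t).1 * θ (h t).1 (h t).2

def obX (b : Bool) : ℝ := if b then (1 : ℝ) else 0

def shiftAlg {X : Type*} (alg : ℕ → List (Fin 2 × X × ℝ) → Fin 2 → ℝ) (j : Fin 2 × X × Bool) :
    ℕ → List (Fin 2 × X × ℝ) → Fin 2 → ℝ :=
  fun t l => alg (t + 1) ((j.1, j.2.1, if j.2.2 then (1 : ℝ) else 0) :: l)

def valV {X : Type*} [Fintype X] (θ : Fin 2 → X → ℝ) (p : X → Bool → ℝ) (μ : Fin 2 → ℝ) :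
    ℕ → (ℕ → List (Fin 2 × X × ℝ) → Fin 2 → ℝ) → ℝ
  | 0, _ => 0
  | n + 1, alg => ∑ i, alg 0 [] i * μ i +
      ∑ j : Fin 2 × X × Bool, alg 0 [] j.1 * θ j.1 j.2.1 * p j.2.1 j.2.2 *
        valV θ p μ n (shiftAlg alg j)

theorem sum_fin_cons {A : Type*} [Fintype A] {n : ℕ} (F : (Fin (n + 1) → A) → ℝ) :
    ∑ f, F f = ∑ a, ∑ g : Fin n → A, F (Fin.cons a g) := by
  rw [← (Fin.consEquiv (fun _ : Fin (n + 1) => A)).sum_comp, Fintype.sum_prod_type]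
  rfl

theorem sum_prod_loss {X : Type*} [Fintype X] [DecidableEq X] (p : X → Bool → ℝ)
    (hp : ∀ x, ∑ b, p x b = 1) (y : X) (φ : Bool → ℝ) :
    ∑ L : X → Bool, (∏ x, p x (L x)) * φ (L y) = ∑ b, p y b * φ b := by
  have h := Finset.prod_univ_sum (fun _ : X => (univ : Finset Bool))
    (fun x b => p x b * (if x = y then φ b else 1))
  rw [Fintype.piFinset_univ] at h
  have h1 : ∀ L : X → Bool, (∏ x, p x (L x)) * φ (L y) =
      ∏ x, (p x (L x) * (if x = y then φ (L x) else 1)) := by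
    intro L
    rw [Finset.prod_mul_distrib, Finset.prod_ite_eq' univ y]
    simp
  rw [Finset.sum_congr rfl fun L _ => h1 L, ← h, Finset.prod_eq_single y]
  · simp
  · intro x _ hx
    simp only [hx, if_false, mul_one]
    exact hp x
  · simp

theorem sum_prod_one {X : Type*} [Fintype X] [DecidableEq X] (p : X → Bool → ℝ)
    (hp : ∀ x, ∑ b, p x b = 1) :
    ∑ L : X → Bool, (∏ x, p x (L x)) = 1 := by
  have h := Finset.prod_univ_sum (fun _ : X => (univ : Finset Bool)) p
  rw [Fintype.piFinset_univ] at h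
  rw [← h]
  exact Finset.prod_eq_one fun x _ => hp x

theorem sum_prod_cost {X : Type*} [Fintype X] [DecidableEq X] (p : X → Bool → ℝ)
    (hp : ∀ x, ∑ b, p x b = 1) (v : X → ℝ) :
    ∑ L : X → Bool, (∏ x, p x (L x)) * (∑ a, v a * (if L a then (1 : ℝ) else 0))
      = ∑ a, v a * p a true := by
  simp_rw [Finset.mul_sum]
  rw [Finset.sum_comm]
  refine Finset.sum_congr rfl fun a _ => ?_
  have := sum_prod_loss p hp a (fun b => v a * (if b then (1 : ℝ) else 0))
  rw [this]
  simp [mul_comm]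

def wt {X : Type*} [Fintype X] (p : X → Bool → ℝ) {n : ℕ} (L : Fin n → X → Bool) : ℝ :=
  ∏ t, ∏ x, p x (L t x)

theorem wt_cons {X : Type*} [Fintype X] (p : X → Bool → ℝ) {n : ℕ} (a : X → Bool)
    (L : Fin n → X → Bool) :
    wt p (Fin.cons a L : Fin (n + 1) → X → Bool) = (∏ x, p x (a x)) * wt p L := by
  simp [wt, Fin.prod_univ_succ]

theorem wt_sum {X : Type*} [Fintype X] [DecidableEq X] (p : X → Bool → ℝ)
    (hp : ∀ x, ∑ b, p x b = 1) (n : ℕ) : ∑ L : Fin n → X → Bool, wt p L = 1 := by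
  induction n with
  | zero => simp [wt]
  | succ n ih =>
    rw [sum_fin_cons]
    simp_rw [wt_cons, ← Finset.mul_sum, ih, mul_one]
    exact sum_prod_one p hp

theorem wt_comp {X : Type*} [Fintype X] [DecidableEq X] (p : X → Bool → ℝ)
    (hp : ∀ x, ∑ b, p x b = 1) (v : X → ℝ) (n : ℕ) :
    ∑ L : Fin n → X → Bool, wt p L * ∑ t, ∑ a, v a * (if L t a then (1 : ℝ) else 0)
      = n * ∑ a, v a * p a true := by
  induction n with
  | zero => simp [wt]
  | succ n ih =>
    rw [sum_fin_cons]
    simp_rw [wt_cons, Fin.sum_univ_succ, Fin.cons_zero, Fin.cons_succ, mul_add, mul_assoc,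
      Finset.sum_add_distrib, ← Finset.mul_sum, ih, ← Finset.sum_mul, wt_sum p hp, one_mul]
    rw [sum_prod_cost p hp, sum_prod_one p hp]
    push_cast
    ring

theorem medProb_cons {X : Type*} [Fintype X] {n : ℕ}
    (alg : ℕ → List (Fin 2 × X × ℝ) → Fin 2 → ℝ) (θ : Fin 2 → X → ℝ)
    (a : X → Bool) (L : Fin n → X → Bool) (z : Fin 2 × X) (h : Fin n → Fin 2 × X) :
    medProb alg θ (Fin.cons a L : Fin (n + 1) → X → Bool)
      (Fin.cons z h : Fin (n + 1) → Fin 2 × X) =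
      alg 0 [] z.1 * θ z.1 z.2 * medProb (shiftAlg alg (z.1, z.2, a z.2)) θ L h := by
  unfold medProb
  rw [Fin.prod_univ_succ]
  simp [medHist, shiftAlg, List.ofFn_succ]

theorem loss_eq {X : Type*} [Fintype X] [DecidableEq X] (θ : Fin 2 → X → ℝ)
    (hθ1 : ∀ i, ∑ x, θ i x = 1) (p : X → Bool → ℝ)
    (hp : ∀ x, ∑ b, p x b = 1) (n : ℕ) :
    ∀ (alg : ℕ → List (Fin 2 × X × ℝ) → Fin 2 → ℝ) (_ : ∀ t l, ∑ i, alg t l i = 1) (k : ℝ),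
    ∑ L : Fin n → X → Bool, wt p L * ∑ h : Fin n → Fin 2 × X, medProb alg θ L h *
        (k + ∑ t : Fin n, ∑ a, θ (h t).1 a * (if L t a then (1 : ℝ) else 0))
      = k + valV θ p (fun i => ∑ a, θ i a * p a true) n alg := by
  induction n with
  | zero => intro alg _ k; simp [wt, medProb, valV]
  | succ n ih =>
    intro alg halg k
    have hs : ∀ j t l, ∑ i, shiftAlg alg j t l i = 1 := fun j t l => halg _ _
    rw [sum_fin_cons]
    have key : ∀ a : X → Bool, ∑ L : Fin n → X → Bool,
        wt p (Fin.cons a L : Fin (n + 1) → X → Bool) *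
          ∑ h : Fin (n + 1) → Fin 2 × X,
          medProb alg θ (Fin.cons a L : Fin (n + 1) → X → Bool) h *
          (k + ∑ t : Fin (n + 1), ∑ x, θ (h t).1 x *
            (if (Fin.cons a L : Fin (n + 1) → X → Bool) t x then (1 : ℝ) else 0))
        = ∑ z : Fin 2 × X, alg 0 [] z.1 * θ z.1 z.2 * ((∏ x, p x (a x)) *
          (k + ∑ x, θ z.1 x * (if a x then (1 : ℝ) else 0)) + (∏ x, p x (a x)) *
            valV θ p (fun i => ∑ a, θ i a * p a true) n (shiftAlg alg (z.1, z.2, a z.2))) := by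
      intro a
      have : ∀ z : Fin 2 × X, alg 0 [] z.1 * θ z.1 z.2 * ((∏ x, p x (a x)) *
          (k + ∑ x, θ z.1 x * (if a x then (1 : ℝ) else 0)) + (∏ x, p x (a x)) *
            valV θ p (fun i => ∑ a, θ i a * p a true) n (shiftAlg alg (z.1, z.2, a z.2)))
          = alg 0 [] z.1 * θ z.1 z.2 * ((∏ x, p x (a x)) *
          ((k + ∑ x, θ z.1 x * (if a x then (1 : ℝ) else 0)) +
            valV θ p (fun i => ∑ a, θ i a * p a true) n (shiftAlg alg (z.1, z.2, a z.2)))) := by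
        intro z; ring
      simp_rw [this, ← ih _ (hs _)]
      simp_rw [sum_fin_cons (A := Fin 2 × X), wt_cons, medProb_cons, Fin.sum_univ_succ, Fin.cons_zero,
        Fin.cons_succ, Finset.mul_sum]
      rw [Finset.sum_comm]
      refine Finset.sum_congr rfl fun z _ => Finset.sum_congr rfl fun L _ =>
        Finset.sum_congr rfl fun h _ => ?_
      ring
    rw [Finset.sum_congr rfl fun a _ => key a, Finset.sum_comm]
    have step : ∀ z : Fin 2 × X, ∑ a : X → Bool, alg 0 [] z.1 * θ z.1 z.2 * ((∏ x, p x (a x)) *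
          (k + ∑ x, θ z.1 x * (if a x then (1 : ℝ) else 0)) + (∏ x, p x (a x)) *
            valV θ p (fun i => ∑ a, θ i a * p a true) n (shiftAlg alg (z.1, z.2, a z.2)))
        = alg 0 [] z.1 * θ z.1 z.2 * (k + ∑ a, θ z.1 a * p a true) +
          ∑ b, alg 0 [] z.1 * θ z.1 z.2 * p z.2 b *
            valV θ p (fun i => ∑ a, θ i a * p a true) n (shiftAlg alg (z.1, z.2, b)) := by
      intro z
      rw [← Finset.mul_sum, Finset.sum_add_distrib,
        sum_prod_loss p hp z.2 (fun b => valV θ p (fun i => ∑ a, θ i a * p a true) n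
          (shiftAlg alg (z.1, z.2, b)))]
      simp_rw [mul_add]
      rw [Finset.sum_add_distrib, ← Finset.sum_mul, sum_prod_one p hp, sum_prod_cost p hp]
      have e : ∀ V : Bool → ℝ, ∑ b, alg 0 [] z.1 * θ z.1 z.2 * p z.2 b * V b =
          alg 0 [] z.1 * θ z.1 z.2 * ∑ b, p z.2 b * V b := by
        intro V
        rw [Finset.mul_sum]
        exact Finset.sum_congr rfl fun b _ => by ring
      rw [e]
      ring
    rw [Finset.sum_congr rfl fun z _ => step z, Finset.sum_add_distrib]
    simp only [valV]
    rw [← add_assoc]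
    congr 1
    · rw [Fintype.sum_prod_type]
      simp_rw [← Finset.sum_mul, ← Finset.mul_sum, hθ1, mul_one, mul_add]
      rw [Finset.sum_add_distrib, ← Finset.sum_mul, halg, one_mul]
    · simp_rw [Fintype.sum_prod_type]

theorem sumj {X : Type*} [Fintype X] (θ : Fin 2 → X → ℝ)
    (hθ1 : ∀ i, ∑ x, θ i x = 1) (p : X → Bool → ℝ)
    (hp : ∀ x, ∑ b, p x b = 1) (u : Fin 2 → ℝ) (hu : ∑ i, u i = 1) :
    ∑ j : Fin 2 × X × Bool, u j.1 * θ j.1 j.2.1 * p j.2.1 j.2.2 = 1 := by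
  simp_rw [Fintype.sum_prod_type, ← Finset.mul_sum, hp, mul_one, ← Finset.mul_sum, hθ1, mul_one, hu]

theorem valV_affine {X : Type*} [Fintype X] (θ : Fin 2 → X → ℝ)
    (hθ1 : ∀ i, ∑ x, θ i x = 1) (p : X → Bool → ℝ)
    (hp : ∀ x, ∑ b, p x b = 1) (k d : ℝ) (ν : Fin 2 → ℝ) (n : ℕ) :
    ∀ (alg : ℕ → List (Fin 2 × X × ℝ) → Fin 2 → ℝ) (_ : ∀ t l, ∑ i, alg t l i = 1),
    valV θ p (fun i => k + d * ν i) n alg = n * k + d * valV θ p ν n alg := by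
  induction n with
  | zero => intro alg _; simp [valV]
  | succ n ih =>
    intro alg halg
    have hs : ∀ j t l, ∑ i, shiftAlg alg j t l i = 1 := fun j t l => halg _ _
    simp only [valV]
    simp_rw [fun j => ih (shiftAlg alg j) (hs j), mul_add]
    rw [Finset.sum_add_distrib, Finset.sum_add_distrib, ← Finset.sum_mul, halg, ← Finset.sum_mul,
      sumj θ hθ1 p hp _ (halg 0 []), Finset.mul_sum, Finset.mul_sum]
    have e1 : ∀ i, alg 0 [] i * (d * ν i) = d * (alg 0 [] i * ν i) := fun i => by ring
    have e2 : ∀ j : Fin 2 × X × Bool, alg 0 [] j.1 * θ j.1 j.2.1 * p j.2.1 j.2.2 *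
        (d * valV θ p ν n (shiftAlg alg j)) = d * (alg 0 [] j.1 * θ j.1 j.2.1 * p j.2.1 j.2.2 *
        valV θ p ν n (shiftAlg alg j)) := fun i => by ring
    simp_rw [e1, e2]
    push_cast
    ring

theorem two_env {X : Type*} [Fintype X] (θ : Fin 2 → X → ℝ) (hθ0 : ∀ i x, 0 ≤ θ i x)
    (hθ1 : ∀ i, ∑ x, θ i x = 1) (p p' : X → Bool → ℝ)
    (hp0 : ∀ x b, 0 ≤ p x b) (hp0' : ∀ x b, 0 ≤ p' x b)
    (hp : ∀ x, ∑ b, p x b = 1) (hp' : ∀ x, ∑ b, p' x b = 1)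
    (q : ℝ) (hq : 0 ≤ q)
    (hB : ∀ i, q ≤ ∑ x, θ i x * ∑ b, Real.sqrt (p x b * p' x b)) (n : ℕ) :
    ∀ (alg : ℕ → List (Fin 2 × X × ℝ) → Fin 2 → ℝ)
      (_ : ∀ t l, (∀ i, 0 ≤ alg t l i) ∧ ∑ i, alg t l i = 1) (α β : ℝ) (_ : 0 ≤ α) (_ : 0 ≤ β),
    ∃ m, 0 ≤ m ∧ m ≤ α ∧ m ≤ β ∧
      n * m ≤ α * valV θ p ![1, 0] n alg + β * valV θ p' ![0, 1] n alg ∧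
      q ^ n * Real.sqrt (α * β) ≤ Real.sqrt (m * (α + β - m)) := by
  induction n with
  | zero =>
    intro alg _ α β hα hβ
    refine ⟨min α β, le_min hα hβ, min_le_left _ _, min_le_right _ _, by simp [valV], ?_⟩
    rcases le_total α β with h | h
    · rw [min_eq_left h]; simp
    · rw [min_eq_right h]; simp [mul_comm]
  | succ n ih =>
    intro alg halg α β hα hβ
    have hs : ∀ j t l, (∀ i, 0 ≤ shiftAlg alg j t l i) ∧ ∑ i, shiftAlg alg j t l i = 1 :=
      fun j t l => halg _ _
    choose m hm0 hmα hmβ hmV hmq using fun j : Fin 2 × X × Bool =>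
      ih (shiftAlg alg j) (hs j) (α * p j.2.1 j.2.2) (β * p' j.2.1 j.2.2)
        (mul_nonneg hα (hp0 _ _)) (mul_nonneg hβ (hp0' _ _))
    set w : Fin 2 × X × Bool → ℝ := fun j => alg 0 [] j.1 * θ j.1 j.2.1 with hw
    have hw0 : ∀ j, 0 ≤ w j := fun j => mul_nonneg ((halg _ _).1 _) (hθ0 _ _)
    have sα : ∑ j, w j * (α * p j.2.1 j.2.2) = α := by
      have := sumj θ hθ1 p hp _ (halg 0 []).2
      calc _ = α * ∑ j : Fin 2 × X × Bool, alg 0 [] j.1 * θ j.1 j.2.1 * p j.2.1 j.2.2 := by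
            rw [Finset.mul_sum]; exact Finset.sum_congr rfl fun j _ => by simp only [hw]; ring
        _ = α := by rw [this, mul_one]
    have sβ : ∑ j, w j * (β * p' j.2.1 j.2.2) = β := by
      have := sumj θ hθ1 p' hp' _ (halg 0 []).2
      calc _ = β * ∑ j : Fin 2 × X × Bool, alg 0 [] j.1 * θ j.1 j.2.1 * p' j.2.1 j.2.2 := by
            rw [Finset.mul_sum]; exact Finset.sum_congr rfl fun j _ => by simp only [hw]; ring
        _ = β := by rw [this, mul_one]
    have lα : ∑ j, w j * m j ≤ α := by
      rw [← sα]; exact Finset.sum_le_sum fun j _ => mul_le_mul_of_nonneg_left (hmα j) (hw0 j)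
    have lβ : ∑ j, w j * m j ≤ β := by
      conv_rhs => rw [← sβ]
      exact Finset.sum_le_sum fun j _ => mul_le_mul_of_nonneg_left (hmβ j) (hw0 j)
    refine ⟨∑ j, w j * m j, Finset.sum_nonneg fun j _ => mul_nonneg (hw0 j) (hm0 j), lα, lβ, ?_, ?_⟩
    · simp only [valV]
      have h1 := (halg 0 []).2
      have a0 := (halg 0 []).1 0
      have a1 := (halg 0 []).1 1
      rw [Fin.sum_univ_two] at h1
      have h2 : ∑ j, w j * (n * m j) ≤ α * (∑ j : Fin 2 × X × Bool,
          alg 0 [] j.1 * θ j.1 j.2.1 * p j.2.1 j.2.2 * valV θ p ![1, 0] n (shiftAlg alg j)) +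
          β * (∑ j : Fin 2 × X × Bool,
          alg 0 [] j.1 * θ j.1 j.2.1 * p' j.2.1 j.2.2 * valV θ p' ![0, 1] n (shiftAlg alg j)) := by
        rw [Finset.mul_sum, Finset.mul_sum, ← Finset.sum_add_distrib]
        refine Finset.sum_le_sum fun j _ =>
          (mul_le_mul_of_nonneg_left (hmV j) (hw0 j)).trans (le_of_eq ?_)
        simp only [hw]; ring
      have h3 : ∑ j, w j * (n * m j) = n * ∑ j, w j * m j := by
        rw [Finset.mul_sum]; exact Finset.sum_congr rfl fun j _ => by ring
      rw [h3] at h2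
      simp only [Fin.sum_univ_two, Matrix.cons_val_zero, Matrix.cons_val_one]
      push_cast
      nlinarith [mul_le_mul_of_nonneg_left lα a0, mul_le_mul_of_nonneg_left lβ a1]
    · have hBs : q ≤ ∑ j : Fin 2 × X × Bool, w j * Real.sqrt (p j.2.1 j.2.2 * p' j.2.1 j.2.2) := by
        simp_rw [Fintype.sum_prod_type, hw, mul_assoc, ← Finset.mul_sum]
        calc q = ∑ i, alg 0 [] i * q := by rw [← Finset.sum_mul, (halg 0 []).2, one_mul]
          _ ≤ _ := Finset.sum_le_sum fun i _ => mul_le_mul_of_nonneg_left (hB i) ((halg 0 []).1 i)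
      have hM : ∀ j, 0 ≤ α * p j.2.1 j.2.2 + β * p' j.2.1 j.2.2 - m j := fun j => by
        linarith [hmα j, mul_nonneg hβ (hp0' j.2.1 j.2.2)]
      calc q ^ (n + 1) * Real.sqrt (α * β) = q ^ n * Real.sqrt (α * β) * q := by ring
        _ ≤ q ^ n * Real.sqrt (α * β) *
            ∑ j : Fin 2 × X × Bool, w j * Real.sqrt (p j.2.1 j.2.2 * p' j.2.1 j.2.2) := by gcongr
        _ = ∑ j, w j * (q ^ n * Real.sqrt (α * p j.2.1 j.2.2 * (β * p' j.2.1 j.2.2))) := by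
            rw [Finset.mul_sum]
            refine Finset.sum_congr rfl fun j _ => ?_
            rw [mul_mul_mul_comm α, Real.sqrt_mul (mul_nonneg hα hβ)]
            ring
        _ ≤ ∑ j, w j * Real.sqrt (m j * (α * p j.2.1 j.2.2 + β * p' j.2.1 j.2.2 - m j)) :=
            Finset.sum_le_sum fun j _ => mul_le_mul_of_nonneg_left (hmq j) (hw0 j)
        _ = ∑ j, Real.sqrt (w j * m j) *
              Real.sqrt (w j * (α * p j.2.1 j.2.2 + β * p' j.2.1 j.2.2 - m j)) := by
            refine Finset.sum_congr rfl fun j _ => ?_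
            rw [← Real.sqrt_mul (mul_nonneg (hw0 j) (hm0 j)), mul_mul_mul_comm,
              Real.sqrt_mul (mul_nonneg (hw0 j) (hw0 j)), Real.sqrt_mul_self (hw0 j)]
        _ ≤ Real.sqrt (∑ j, w j * m j) *
              Real.sqrt (∑ j, w j * (α * p j.2.1 j.2.2 + β * p' j.2.1 j.2.2 - m j)) :=
            Real.sum_sqrt_mul_sqrt_le _ (fun j => mul_nonneg (hw0 j) (hm0 j))
              (fun j => mul_nonneg (hw0 j) (hM j))
        _ = _ := by
            rw [← Real.sqrt_mul (Finset.sum_nonneg fun j _ => mul_nonneg (hw0 j) (hm0 j))]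
            congr 2
            simp_rw [mul_sub, mul_add]
            rw [Finset.sum_sub_distrib, Finset.sum_add_distrib, sα, sβ]

theorem cap_term (r a b : ℝ) (hr0 : 0 ≤ r) (hr1 : r ≤ 1) (ha : 0 ≤ a) (hb : 0 ≤ b) :
    r * (1 - r) * ((a - b) ^ 2 / (r * a + (1 - r) * b)) ≤ (Real.sqrt a - Real.sqrt b) ^ 2 := by
  obtain ⟨u, hu, rfl⟩ : ∃ u, 0 ≤ u ∧ a = u ^ 2 := ⟨_, Real.sqrt_nonneg a, (Real.sq_sqrt ha).symm⟩
  obtain ⟨v, hv, rfl⟩ : ∃ v, 0 ≤ v ∧ b = v ^ 2 := ⟨_, Real.sqrt_nonneg b, (Real.sq_sqrt hb).symm⟩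
  rw [Real.sqrt_sq hu, Real.sqrt_sq hv]
  have hd : 0 ≤ r * u ^ 2 + (1 - r) * v ^ 2 := by
    have := sub_nonneg.2 hr1; positivity
  rw [← mul_div_assoc]
  refine div_le_of_le_mul₀ hd (sq_nonneg _) ?_
  nlinarith [mul_nonneg (sq_nonneg (u - v)) (sq_nonneg (r * u - (1 - r) * v))]

def ffun (a b : ℝ) : ℝ := (Real.sqrt a - Real.sqrt b) / (Real.sqrt a + Real.sqrt b)

theorem ffun_sq_le (a b : ℝ) : ffun a b ^ 2 ≤ 1 := by
  have hu := Real.sqrt_nonneg a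
  have hv := Real.sqrt_nonneg b
  unfold ffun
  rw [div_pow]
  refine div_le_one_of_le₀ ?_ (sq_nonneg _)
  nlinarith [mul_nonneg hu hv]

theorem ffun_gap (a b : ℝ) (ha : 0 ≤ a) (hb : 0 ≤ b) :
    (a - b) * ffun a b = (Real.sqrt a - Real.sqrt b) ^ 2 := by
  obtain ⟨u, hu, rfl⟩ : ∃ u, 0 ≤ u ∧ a = u ^ 2 := ⟨_, Real.sqrt_nonneg a, (Real.sq_sqrt ha).symm⟩
  obtain ⟨v, hv, rfl⟩ : ∃ v, 0 ≤ v ∧ b = v ^ 2 := ⟨_, Real.sqrt_nonneg b, (Real.sq_sqrt hb).symm⟩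
  unfold ffun
  rw [Real.sqrt_sq hu, Real.sqrt_sq hv]
  rcases eq_or_ne (u + v) 0 with h | h
  · have : u = 0 := by linarith
    have : v = 0 := by linarith
    simp [*]
  · field_simp
    ring

theorem ffun_info (a b c : ℝ) (ha : 0 ≤ a) (hb : 0 ≤ b) (hc : c = a ∨ c = b) :
    c * ffun a b ^ 2 ≤ (Real.sqrt a - Real.sqrt b) ^ 2 := by
  obtain ⟨u, hu, rfl⟩ : ∃ u, 0 ≤ u ∧ a = u ^ 2 := ⟨_, Real.sqrt_nonneg a, (Real.sq_sqrt ha).symm⟩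
  obtain ⟨v, hv, rfl⟩ : ∃ v, 0 ≤ v ∧ b = v ^ 2 := ⟨_, Real.sqrt_nonneg b, (Real.sq_sqrt hb).symm⟩
  have hc' : c ≤ (u + v) ^ 2 := by rcases hc with rfl | rfl <;> nlinarith [mul_nonneg hu hv]
  unfold ffun
  rw [Real.sqrt_sq hu, Real.sqrt_sq hv, div_pow, ← mul_div_assoc]
  refine div_le_of_le_mul₀ (sq_nonneg _) (sq_nonneg _) ?_
  nlinarith [mul_le_mul_of_nonneg_left hc' (sq_nonneg (u - v))]

def pfun (s f : ℝ) (b : Bool) : ℝ := if b then 1 / 2 + s * f else 1 / 2 - s * f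

theorem pfun_sum (s f : ℝ) : ∑ b, pfun s f b = 1 := by
  simp [pfun]; ring

theorem pfun_nonneg (s f : ℝ) (hs : s ^ 2 ≤ 1 / 4) (hf : f ^ 2 ≤ 1) (b : Bool) :
    0 ≤ pfun s f b := by
  have h : (s * f) ^ 2 ≤ (1 / 2) ^ 2 := by
    rw [mul_pow]; nlinarith [sq_nonneg s, sq_nonneg f]
  have := abs_le.1 (abs_le_of_sq_le_sq h (by norm_num))
  cases b <;> simp [pfun] <;> linarith [this.1, this.2]

theorem pfun_aff (s f : ℝ) (hs : s ^ 2 ≤ 3 / 16) (hf : f ^ 2 ≤ 1) :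
    1 - 8 / 3 * s ^ 2 * f ^ 2 ≤ ∑ b, Real.sqrt (pfun s f b * pfun (-s) f b) := by
  have h : s ^ 2 * f ^ 2 ≤ 3 / 16 := by nlinarith [sq_nonneg s, sq_nonneg f]
  have h0 : 0 ≤ s ^ 2 * f ^ 2 := by positivity
  have key : (1 - 8 / 3 * s ^ 2 * f ^ 2) / 2 ≤ Real.sqrt (1 / 4 - s ^ 2 * f ^ 2) := by
    apply Real.le_sqrt_of_sq_le
    nlinarith
  have e1 : pfun s f true * pfun (-s) f true = 1 / 4 - s ^ 2 * f ^ 2 := by simp [pfun]; ring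
  have e2 : pfun s f false * pfun (-s) f false = 1 / 4 - s ^ 2 * f ^ 2 := by simp [pfun]; ring
  rw [Fintype.sum_bool, e1, e2]
  linarith

theorem regret_env {X : Type*} [Fintype X] [DecidableEq X] (θ : Fin 2 → X → ℝ)
    (hθ1 : ∀ i, ∑ x, θ i x = 1) (p : X → Bool → ℝ) (hp : ∀ x, ∑ b, p x b = 1) (T : ℕ)
    (alg : ℕ → List (Fin 2 × X × ℝ) → Fin 2 → ℝ) (halg : ∀ t l, ∑ i, alg t l i = 1)
    (i₀ : Fin 2) (d : ℝ) (ν : Fin 2 → ℝ)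
    (hν : ∀ i, ∑ a, θ i a * p a true = ∑ a, θ i₀ a * p a true + d * ν i) :
    d * valV θ p ν T alg ≤
      (∑ L, wt p L * ∑ h : Fin T → Fin 2 × X,
              medProb alg θ L h *
                ∑ t : Fin T, ∑ a, θ (h t).1 a * (if L t a then (1 : ℝ) else 0))
          - univ.inf' univ_nonempty (fun i : Fin 2 =>
              ∑ L, wt p L * ∑ t : Fin T, ∑ a, θ i a * (if L t a then (1 : ℝ) else 0)) := by
  have h1 := loss_eq θ hθ1 p hp T alg halg 0
  simp only [zero_add] at h1
  have h2 := Finset.inf'_le (s := univ) (fun i : Fin 2 =>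
      ∑ L : Fin T → X → Bool, wt p L * ∑ t : Fin T, ∑ a, θ i a * (if L t a then (1 : ℝ) else 0))
      (Finset.mem_univ i₀)
  beta_reduce at h2
  rw [wt_comp p hp (θ i₀) T] at h2
  have h3 : valV θ p (fun i => ∑ a, θ i a * p a true) T alg =
      T * (∑ a, θ i₀ a * p a true) + d * valV θ p ν T alg := by
    rw [← valV_affine θ hθ1 p hp _ d ν T alg halg]
    congr 1
    funext i
    exact hν i
  rw [h1, h3]
  linarith

theorem num_m (m B : ℝ) (hm : m ≤ 1) (hB : 67 / 75 ≤ B) (h : B ≤ Real.sqrt (m * (1 + 1 - m))) :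
    68 / 125 ≤ m := by
  have h1 : B ^ 2 ≤ m * (1 + 1 - m) := (Real.le_sqrt' (by linarith)).1 h
  by_contra hc
  push Not at hc
  nlinarith

/-- Two-policy mediator-feedback lower bound.  For any algorithm and any
horizon `T ≥ 1/(8 log(4/3) H²(θ₀,θ₁))`, there exists a (stochastic, Boolean-valued)
sequence of losses, given by a distribution `w` over loss sequences, under which the
expected regret is at least `(1/(13√2))·√(C(θ₀,θ₁)·T)`, where `C(θ₀,θ₁)` is the
chi-squared capacity of the pair. -/
theorem two_policy_lower_bound {X : Type*} [Fintype X] [DecidableEq X]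
    (θ : Fin 2 → X → ℝ) (hθ0 : ∀ i x, 0 ≤ θ i x) (hθ1 : ∀ i, ∑ x, θ i x = 1)
    (T : ℕ)
    (hT : 1 / (8 * Real.log (4 / 3) *
        ((1 / 2) * ∑ x, (Real.sqrt (θ 0 x) - Real.sqrt (θ 1 x)) ^ 2)) ≤ (T : ℝ))
    (alg : ℕ → List (Fin 2 × X × ℝ) → Fin 2 → ℝ)
    (halg : ∀ t l, (∀ i, 0 ≤ alg t l i) ∧ ∑ i, alg t l i = 1) :
    ∃ w : (Fin T → X → Bool) → ℝ, (∀ L, 0 ≤ w L) ∧ (∑ L, w L = 1) ∧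
      1 / (13 * Real.sqrt 2) *
          Real.sqrt
            (sSup ((fun r : ℝ =>
                r * (1 - r) * ∑ x, (θ 0 x - θ 1 x) ^ 2 /
                  (r * θ 0 x + (1 - r) * θ 1 x)) '' Set.Icc (0 : ℝ) 1) * T)
        ≤ (∑ L, w L * ∑ h : Fin T → Fin 2 × X,
              medProb alg θ L h *
                ∑ t : Fin T, ∑ a, θ (h t).1 a * (if L t a then (1 : ℝ) else 0))
          - univ.inf' univ_nonempty (fun i : Fin 2 =>
              ∑ L, w L * ∑ t : Fin T, ∑ a, θ i a * (if L t a then (1 : ℝ) else 0)) := by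
  set D : ℝ := ∑ x, (Real.sqrt (θ 0 x) - Real.sqrt (θ 1 x)) ^ 2 with hD
  have hD0 : 0 ≤ D := Finset.sum_nonneg fun x _ => sq_nonneg _
  have halg1 : ∀ t l, ∑ i, alg t l i = 1 := fun t l => (halg t l).2
  -- capacity bound
  have hC : sSup ((fun r : ℝ =>
                r * (1 - r) * ∑ x, (θ 0 x - θ 1 x) ^ 2 /
                  (r * θ 0 x + (1 - r) * θ 1 x)) '' Set.Icc (0 : ℝ) 1) ≤ D := by
    apply csSup_le (Set.Nonempty.image _ ⟨0, by simp⟩)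
    rintro _ ⟨r, hr, rfl⟩
    simp only []
    rw [Finset.mul_sum]
    exact Finset.sum_le_sum fun x _ => cap_term r _ _ hr.1 hr.2 (hθ0 0 x) (hθ0 1 x)
  have hS : Real.sqrt (sSup ((fun r : ℝ =>
                r * (1 - r) * ∑ x, (θ 0 x - θ 1 x) ^ 2 /
                  (r * θ 0 x + (1 - r) * θ 1 x)) '' Set.Icc (0 : ℝ) 1) * T) ≤
      Real.sqrt (D * T) := Real.sqrt_le_sqrt (mul_le_mul_of_nonneg_right hC (Nat.cast_nonneg T))
  -- the environments
  set f : X → ℝ := fun x => ffun (θ 0 x) (θ 1 x) with hf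
  have hf1 : ∀ x, f x ^ 2 ≤ 1 := fun x => ffun_sq_le _ _
  have hgap : ∑ x, θ 0 x * f x - ∑ x, θ 1 x * f x = D := by
    rw [← Finset.sum_sub_distrib, hD]
    refine Finset.sum_congr rfl fun x _ => ?_
    rw [← ffun_gap _ _ (hθ0 0 x) (hθ0 1 x)]
    simp only [hf]
    ring
  have hmean : ∀ s i, ∑ a, θ i a * pfun s (f a) true = 1 / 2 + s * ∑ x, θ i x * f x := by
    intro s i
    have : ∀ a, θ i a * pfun s (f a) true = θ i a * (1 / 2) + s * (θ i a * f a) := by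
      intro a; simp only [pfun, if_true]; ring
    simp_rw [this]
    rw [Finset.sum_add_distrib, ← Finset.sum_mul, hθ1, ← Finset.mul_sum, one_mul]
  have hsum : ∀ s x, ∑ b, pfun s (f x) b = 1 := fun s x => pfun_sum s (f x)
  have hR0 := fun s => regret_env θ hθ1 (fun x => pfun s (f x)) (hsum s) T alg halg1 1 (s * D)
    ![1, 0] (by
      intro i
      rw [hmean, hmean, ← hgap]
      fin_cases i <;> simp; ring)
  have hR1 := fun s => regret_env θ hθ1 (fun x => pfun s (f x)) (hsum s) T alg halg1 0 (-s * D)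
    ![0, 1] (by
      intro i
      rw [hmean, hmean, ← hgap]
      fin_cases i <;> simp; ring)
  have hw : ∀ s : ℝ, s ^ 2 ≤ 1 / 4 → ∀ L : Fin T → X → Bool, 0 ≤ wt (fun x => pfun s (f x)) L :=
    fun s hs L => Finset.prod_nonneg fun t _ => Finset.prod_nonneg fun x _ =>
      pfun_nonneg s _ hs (hf1 x) _
  rcases eq_or_lt_of_le hD0 with hDz | hDp
  · refine ⟨wt (fun x => pfun 0 (f x)), hw 0 (by norm_num), wt_sum _ (hsum 0) T, ?_⟩
    refine le_trans ?_ (hR0 0)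
    rw [← hDz, zero_mul, Real.sqrt_zero] at hS
    rw [zero_mul, zero_mul]
    exact mul_nonpos_of_nonneg_of_nonpos (by positivity) hS
  · have hlog : Real.log (4 / 3) ≤ 1 / 3 := by
      have := Real.log_le_sub_one_of_pos (show (0 : ℝ) < 4 / 3 by norm_num)
      linarith
    have hlog0 : 0 < Real.log (4 / 3) := Real.log_pos (by norm_num)
    have hDT : 3 / 4 ≤ D * T := by
      rw [div_le_iff₀ (by positivity)] at hT
      have hT0 : (0 : ℝ) ≤ T := Nat.cast_nonneg T
      nlinarith [mul_le_mul_of_nonneg_left hlog (mul_nonneg hDp.le hT0)]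
    have hTp : (0 : ℝ) < T := by
      by_contra hc
      have : D * T ≤ 0 := mul_nonpos_of_nonneg_of_nonpos hD0 (not_lt.1 hc)
      linarith
    have hT1 : (1 : ℝ) ≤ T := by
      have : 0 < T := by exact_mod_cast hTp
      exact_mod_cast this
    set R := Real.sqrt (D * T) with hR
    have hRp : 0 < R := Real.sqrt_pos.2 (by linarith)
    have hRR : R ^ 2 = D * T := Real.sq_sqrt (by linarith)
    set ε : ℝ := 1 / 5 / R with hε
    have hεp : 0 < ε := by positivity
    have hεR : ε * R = 1 / 5 := by rw [hε]; field_simp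
    have hε2 : ε ^ 2 * (D * T) = 1 / 25 := by
      rw [← hRR, ← mul_pow, hεR]; norm_num
    have hεs : ε ^ 2 ≤ 3 / 16 := by nlinarith [sq_nonneg ε]
    have hq0 : 0 ≤ 1 - 8 / 75 / (T : ℝ) := by
      have : 8 / 75 / (T : ℝ) ≤ 8 / 75 := div_le_self (by norm_num) hT1
      linarith
    have hεD : ε ^ 2 * D = 1 / 25 / T := by
      rw [eq_div_iff hTp.ne']; linarith
    obtain ⟨m, hm0, hm1, -, hmV, hmq⟩ := two_env θ hθ0 hθ1 (fun x => pfun ε (f x))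
      (fun x => pfun (-ε) (f x))
      (fun x b => pfun_nonneg _ _ (by linarith) (hf1 x) b)
      (fun x b => pfun_nonneg _ _ (by rw [neg_sq]; linarith) (hf1 x) b)
      (hsum ε) (hsum (-ε)) (1 - 8 / 75 / (T : ℝ)) hq0 (by
        intro i
        calc 1 - 8 / 75 / (T : ℝ) = 1 - 8 / 3 * (ε ^ 2 * D) := by rw [hεD]; ring
          _ ≤ 1 - 8 / 3 * (ε ^ 2 * ∑ x, θ i x * f x ^ 2) := by
            have : ∑ x, θ i x * f x ^ 2 ≤ D := Finset.sum_le_sum fun x _ =>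
              ffun_info _ _ _ (hθ0 0 x) (hθ0 1 x) (by fin_cases i <;> simp)
            have := mul_le_mul_of_nonneg_left this (sq_nonneg ε)
            linarith
          _ = ∑ x, θ i x * (1 - 8 / 3 * ε ^ 2 * f x ^ 2) := by
            simp_rw [mul_sub, mul_one]
            rw [Finset.sum_sub_distrib, hθ1, Finset.mul_sum, Finset.mul_sum]
            congr 1
            exact Finset.sum_congr rfl fun x _ => by ring
          _ ≤ _ := Finset.sum_le_sum fun x _ =>
            mul_le_mul_of_nonneg_left (pfun_aff ε (f x) hεs (hf1 x)) (hθ0 i x)) T alg halg 1 1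
      zero_le_one zero_le_one
    rw [mul_one, Real.sqrt_one, mul_one] at hmq
    have hbern : 67 / 75 ≤ (1 - 8 / 75 / (T : ℝ)) ^ T := by
      have h := one_add_mul_le_pow (a := -(8 / 75 / (T : ℝ))) (by linarith) T
      have e : (T : ℝ) * (-(8 / 75 / (T : ℝ))) = -(8 / 75) := by field_simp
      rw [e, ← sub_eq_add_neg, ← sub_eq_add_neg] at h
      linarith
    have hm := num_m m _ hm1 hbern hmq
    have hc : 1 / (13 * Real.sqrt 2) ≤ 34 / 625 := by
      have : (1.4142 : ℝ) ≤ Real.sqrt 2 := Real.le_sqrt_of_sq_le (by norm_num)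
      rw [div_le_div_iff₀ (by positivity) (by norm_num)]
      linarith
    have hgoal : 1 / (13 * Real.sqrt 2) * Real.sqrt (sSup ((fun r : ℝ =>
                r * (1 - r) * ∑ x, (θ 0 x - θ 1 x) ^ 2 /
                  (r * θ 0 x + (1 - r) * θ 1 x)) '' Set.Icc (0 : ℝ) 1) * T) ≤ 34 / 625 * R :=
      mul_le_mul hc hS (Real.sqrt_nonneg _) (by norm_num)
    have hlow : 34 / 625 * R ≤ ε * D * (T * m / 2) := by
      have e : ε * D * T = R / 5 := by
        have : ε * (D * T) = ε * R * R := by rw [← hRR]; ring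
        rw [hεR] at this
        linarith
      have : ε * D * (T * m / 2) = R * m / 10 := by
        rw [show ε * D * (T * m / 2) = ε * D * T * m / 2 by ring, e]; ring
      rw [this]
      nlinarith
    have hεD0 : 0 ≤ ε * D := by positivity
    rw [one_mul, one_mul] at hmV
    rcases le_total (T * m / 2) (valV θ (fun x => pfun ε (f x)) ![1, 0] T alg) with h | h
    · refine ⟨wt (fun x => pfun ε (f x)), hw ε (by linarith), wt_sum _ (hsum ε) T, ?_⟩
      exact (hgoal.trans hlow).trans ((mul_le_mul_of_nonneg_left h hεD0).trans (hR0 ε))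
    · have h' : T * m / 2 ≤ valV θ (fun x => pfun (-ε) (f x)) ![0, 1] T alg := by linarith
      refine ⟨wt (fun x => pfun (-ε) (f x)), hw (-ε) (by rw [neg_sq]; linarith),
        wt_sum _ (hsum (-ε)) T, ?_⟩
      have := hR1 (-ε)
      rw [neg_neg] at this
      exact (hgoal.trans hlow).trans ((mul_le_mul_of_nonneg_left h' hεD0).trans this)

end
end

section
/- In the mediator feedback problem with the ε-greedy policy set (N policies on N outcomes, θ_i(x) = (1−ε)/N + ε𝟙{x=x_i}), for any algorithm and T ≥ N/(4 log(4/3)), there exists a sequence of [0,1]-valued losses such that R_T ≥ (ε/18)·√(NT). -/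
open Finset

noncomputable section

/-- The ε-greedy policy: `N` policies on `N` outcomes, the `i`-th policy assigning
probability `(1−ε)/N + ε·𝟙{x = i}` to outcome `x`. -/
def epsGreedy (N : ℕ) (ε : ℝ) (i x : Fin N) : ℝ :=
  (1 - ε) / N + if x = i then ε else 0

namespace EG

/-- trajectory weight -/
def traj {Y Z : Type*} (κ : ℕ → List Z → Y → ℝ) (obs : Y → Z) {T : ℕ} (y : Fin T → Y) : ℝ :=
  ∏ t : Fin T, κ t ((List.ofFn (fun s => obs (y s))).take t) (y t)

lemma traj_snoc {Y Z : Type*} (κ : ℕ → List Z → Y → ℝ) (obs : Y → Z) {T : ℕ}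
    (y : Fin T → Y) (z : Y) :
    traj κ obs (Fin.snoc (α := fun _ => Y) y z : Fin (T+1) → Y)
      = traj κ obs y * κ T (List.ofFn (fun s => obs (y s))) z := by
  unfold traj
  rw [Fin.prod_univ_castSucc]
  have h : (List.ofFn (fun s => obs ((Fin.snoc (α := fun _ => Y) y z : Fin (T+1) → Y) s)))
      = List.ofFn (fun s => obs (y s)) ++ [obs z] := by
    rw [List.ofFn_succ']
    simp
  rw [h]
  congr 1
  · refine Finset.prod_congr rfl fun t _ => ?_
    rw [List.take_append_of_le_length (by simp)]
    simp
  · simp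

lemma sum_snoc {Y : Type*} [Fintype Y] {T : ℕ} (F : (Fin (T+1) → Y) → ℝ) :
    ∑ y, F y = ∑ y : Fin T → Y, ∑ z : Y, F (Fin.snoc (α := fun _ => Y) y z) := by
  rw [← (Fin.snocEquiv (fun _ : Fin (T+1) => Y)).sum_comp, Fintype.sum_prod_type,
    Finset.sum_comm]
  rfl

lemma traj_sum {Y Z : Type*} [Fintype Y] (κ : ℕ → List Z → Y → ℝ) (obs : Y → Z)
    (hs : ∀ t l, ∑ y, κ t l y = 1) (T : ℕ) :
    ∑ y : Fin T → Y, traj κ obs y = 1 := by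
  induction T with
  | zero => simp [traj]
  | succ T ih =>
    rw [sum_snoc]
    simp_rw [traj_snoc, ← Finset.mul_sum, hs, mul_one]
    exact ih

lemma traj_mean {Y Z : Type*} [Fintype Y] (κ : ℕ → List Z → Y → ℝ) (obs : Y → Z)
    (hs : ∀ t l, ∑ y, κ t l y = 1) (g : Y → ℝ) (hg : ∀ t l, ∑ y, κ t l y * g y = 0) (T : ℕ) :
    ∑ y : Fin T → Y, traj κ obs y * ∑ t, g (y t) = 0 := by
  induction T with
  | zero => simp
  | succ T ih =>
    rw [sum_snoc]
    simp_rw [traj_snoc, Fin.sum_univ_castSucc, Fin.snoc_castSucc, Fin.snoc_last, mul_add,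
      Finset.sum_add_distrib]
    have h1 : ∀ y : Fin T → Y, ∑ z, traj κ obs y * κ T (List.ofFn (fun s => obs (y s))) z
        * ∑ t, g (y t) = traj κ obs y * ∑ t, g (y t) := by
      intro y
      rw [← Finset.sum_mul, ← Finset.mul_sum, hs, mul_one]
    have h2 : ∀ y : Fin T → Y, ∑ z, traj κ obs y * κ T (List.ofFn (fun s => obs (y s))) z
        * g z = 0 := by
      intro y
      simp_rw [mul_assoc]
      rw [← Finset.mul_sum, hg, mul_zero]
    simp_rw [h1, h2, ih]
    simp

lemma traj_push {Y Z : Type*} [Fintype Y] [Fintype Z] [DecidableEq Z]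
    (κ : ℕ → List Z → Y → ℝ) (obs : Y → Z)
    (κ' : ℕ → List Z → Z → ℝ) (h : ∀ t l z, ∑ y with obs y = z, κ t l y = κ' t l z) {T : ℕ}
    (F : (Fin T → Z) → ℝ) :
    ∑ y : Fin T → Y, traj κ obs y * F (fun s => obs (y s)) = ∑ z, traj κ' id z * F z := by
  classical
  rw [← Finset.sum_fiberwise (s := univ) (g := fun y : Fin T → Y => fun s => obs (y s))]
  refine Finset.sum_congr rfl fun z _ => ?_
  have : traj κ' id z = ∑ y : Fin T → Y with (fun s => obs (y s)) = z, traj κ obs y := by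
    unfold traj
    simp_rw [← h, Finset.prod_univ_sum]
    refine Finset.sum_congr ?_ ?_
    · ext y
      simp [funext_iff]
    · intro y hy
      simp only [Finset.mem_filter, Finset.mem_univ, true_and] at hy
      subst hy
      rfl
  rw [this, Finset.sum_mul]
  refine Finset.sum_congr rfl fun y hy => ?_
  simp only [Finset.mem_filter, Finset.mem_univ, true_and] at hy
  rw [hy]

/-- Bernoulli mass -/
def rho {X : Type*} (p : X → ℝ) (a : X) (b : Bool) : ℝ := if b then p a else 1 - p a

/-- product loss law for one round -/
def w1 {X : Type*} [Fintype X] (p : X → ℝ) (l : X → Bool) : ℝ := ∏ a, rho p a (l a)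

lemma w1_sum {X : Type*} [Fintype X] [DecidableEq X] (p : X → ℝ) : ∑ l, w1 p l = 1 := by
  unfold w1
  rw [← Fintype.piFinset_univ, ← Finset.prod_univ_sum]
  simp [rho]

lemma w1_marg {X : Type*} [Fintype X] [DecidableEq X] (p : X → ℝ) (x : X) (b : Bool) :
    ∑ l with l x = b, w1 p l = rho p x b := by
  unfold w1
  have : (univ.filter fun l : X → Bool => l x = b)
      = Fintype.piFinset (fun a => if a = x then {b} else univ) := by
    ext l
    simp only [Finset.mem_filter, Finset.mem_univ, true_and, Fintype.mem_piFinset]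
    constructor
    · intro h a
      by_cases ha : a = x
      · subst ha; simp [h]
      · simp [ha]
    · intro h
      simpa using h x
  rw [this, ← Finset.prod_univ_sum, Finset.prod_eq_single x]
  · simp
  · intro a _ ha
    simp [ha, rho]
  · simp

lemma w1_loss {X : Type*} [Fintype X] [DecidableEq X] (p : X → ℝ) (q : X → ℝ) :
    ∑ l, w1 p l * ∑ a, q a * (if l a then (1:ℝ) else 0) = ∑ a, q a * p a := by
  simp_rw [Finset.mul_sum]
  rw [Finset.sum_comm]
  refine Finset.sum_congr rfl fun a _ => ?_
  have := w1_marg p a true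
  rw [Finset.sum_filter] at this
  have h2 : p a = rho p a true := by simp [rho]
  rw [h2, ← this, Finset.mul_sum]
  refine Finset.sum_congr rfl fun l _ => ?_
  split_ifs <;> ring

lemma hoeff (m : ℝ) : 1 - m * (1 - Real.exp (-1)) ≤ Real.exp (-m + 1/8) := by
  have e1 := Real.exp_one_gt_d9
  have e2 := Real.exp_one_lt_d9
  set a := 1 - Real.exp (-1) with ha
  have hinv : Real.exp (-1) * Real.exp 1 = 1 := by rw [← Real.exp_add]; simp
  have ha1 : 0.63212 ≤ a := by
    rw [ha]; nlinarith [Real.exp_pos (-1)]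
  have ha2 : a ≤ 0.63213 := by
    rw [ha]; nlinarith [Real.exp_pos (-1)]
  have hexp : a ≤ Real.exp (-0.458) := by
    refine ha2.trans ?_
    have := Real.exp_bound (x := -0.458) (by norm_num [abs_le]) (n := 7) (by norm_num)
    rw [abs_le] at this
    have h1 := this.1
    norm_num [Finset.sum_range_succ, Nat.factorial, abs_of_pos] at h1 ⊢
    linarith
  have h0 : 0 < a := by linarith
  have h3 : Real.exp (-m + 1/8) = Real.exp (-0.458) * Real.exp (-m + 1/8 + 0.458) := by
    rw [← Real.exp_add]; ring_nf
  have h4 := Real.add_one_le_exp (-m + 1/8 + 0.458)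
  have h5 : a * Real.exp (-m + 1/8 + 0.458) ≤ Real.exp (-m + 1/8) := by
    rw [h3]; gcongr
  have h6 : a * (-m + 1/8 + 0.458 + 1) ≤ a * Real.exp (-m + 1/8 + 0.458) := by gcongr
  nlinarith

/-- change of measure -/
lemma change {Ω : Type*} [Fintype Ω] (p : Ω → ℝ) (hp : ∀ z, 0 ≤ p z) (hp1 : ∑ z, p z = 1)
    (r f : Ω → ℝ) (hq1 : ∑ z, p z * Real.exp (r z) = 1) (hf : ∀ z, 0 ≤ f z ∧ f z ≤ 1) :
    ∑ z, p z * Real.exp (r z) * f z ≤ ∑ z, p z * f z - ∑ z, p z * r z + 1/8 := by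
  have hj : Real.exp (∑ z, p z * (r z - f z)) ≤ ∑ z, p z * Real.exp (r z - f z) := by
    have := convexOn_exp.map_sum_le (t := univ) (w := p) (p := fun z => r z - f z)
      (fun z _ => hp z) hp1 (by simp)
    simpa using this
  have hc : ∀ x : ℝ, 0 ≤ x → x ≤ 1 → Real.exp (-x) ≤ 1 - x * (1 - Real.exp (-1)) := by
    intro x h0 h1
    have := convexOn_exp.2 (Set.mem_univ 0) (Set.mem_univ (-1)) (sub_nonneg.2 h1) h0 (by ring)
    simp at this
    linarith
  have h2 : ∑ z, p z * Real.exp (r z - f z) ≤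
      1 - (∑ z, p z * Real.exp (r z) * f z) * (1 - Real.exp (-1)) := by
    calc _ ≤ ∑ z, p z * Real.exp (r z) * (1 - f z * (1 - Real.exp (-1))) := by
          refine Finset.sum_le_sum fun z _ => ?_
          rw [sub_eq_add_neg, Real.exp_add, ← mul_assoc]
          exact mul_le_mul_of_nonneg_left (hc _ (hf z).1 (hf z).2)
            (mul_nonneg (hp z) (Real.exp_pos _).le)
      _ = _ := by
          simp_rw [mul_sub, mul_one, Finset.sum_sub_distrib, Finset.sum_mul, hq1]
          simp_rw [← mul_assoc]
  have h3 := (hj.trans h2).trans (hoeff _)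
  rw [Real.exp_le_exp] at h3
  simp_rw [mul_sub, Finset.sum_sub_distrib] at h3
  linarith

lemma eps_nonneg {N : ℕ} {ε : ℝ} (hε : ε ∈ Set.Icc (0 : ℝ) 1) (i x : Fin N) :
    0 ≤ epsGreedy N ε i x := by
  unfold epsGreedy
  have := div_nonneg (sub_nonneg.2 hε.2) (Nat.cast_nonneg (α := ℝ) N)
  have := hε.1
  split_ifs <;> linarith

lemma eps_sum {N : ℕ} [NeZero N] (ε : ℝ) (i : Fin N) : ∑ x, epsGreedy N ε i x = 1 := by
  unfold epsGreedy
  have : (N : ℝ) ≠ 0 := NeZero.ne _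
  simp [Finset.sum_add_distrib]
  field_simp
  ring

/-- means of environment `i` -/
def pI {N : ℕ} (Δ : ℝ) (i a : Fin N) : ℝ := 1/2 - if a = i then Δ else 0

lemma eps_cost {N : ℕ} [NeZero N] (ε Δ : ℝ) (i j : Fin N) :
    ∑ a, epsGreedy N ε j a * pI Δ i a
      = 1/2 - Δ * ((1 - ε) / N) - Δ * ε * (if j = i then 1 else 0) := by
  unfold pI
  simp_rw [mul_sub, Finset.sum_sub_distrib, ← Finset.sum_mul, eps_sum]
  simp [epsGreedy]
  by_cases h : i = j
  · subst h; simp; ring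
  · simp [h, Ne.symm h]; ring

abbrev ZZ (N : ℕ) := Fin N × Fin N × Bool

/-- history as seen by the algorithm -/
def toH {N : ℕ} (l : List (ZZ N)) : List (Fin N × Fin N × ℝ) :=
  l.map fun z => (z.1, z.2.1, if z.2.2 then (1:ℝ) else 0)

/-- observed kernel -/
def kZ {N : ℕ} (alg : ℕ → List (Fin N × Fin N × ℝ) → Fin N → ℝ) (ε : ℝ) (p : Fin N → ℝ)
    (t : ℕ) (l : List (ZZ N)) (z : ZZ N) : ℝ :=
  rho p z.2.1 z.2.2 * (alg t (toH l) z.1 * epsGreedy N ε z.1 z.2.1)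

/-- full kernel -/
def kY {N : ℕ} (alg : ℕ → List (Fin N × Fin N × ℝ) → Fin N → ℝ) (ε : ℝ) (p : Fin N → ℝ)
    (t : ℕ) (l : List (ZZ N)) (y : (Fin N → Bool) × (Fin N × Fin N)) : ℝ :=
  w1 p y.1 * (alg t (toH l) y.2.1 * epsGreedy N ε y.2.1 y.2.2)

/-- observation -/
def obs {N : ℕ} (y : (Fin N → Bool) × (Fin N × Fin N)) : ZZ N := (y.2.1, y.2.2, y.1 y.2.2)

section
variable {N : ℕ} [NeZero N] (alg : ℕ → List (Fin N × Fin N × ℝ) → Fin N → ℝ) (ε : ℝ)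
  (p : Fin N → ℝ)

lemma kY_mean (halg : ∀ t l, (∀ i, 0 ≤ alg t l i) ∧ ∑ i, alg t l i = 1)
    (G : (Fin N → Bool) → Fin N → ℝ) (t : ℕ) (l : List (ZZ N)) :
    ∑ y, kY alg ε p t l y * G y.1 y.2.1
      = ∑ j, alg t (toH l) j * ∑ L, w1 p L * G L j := by
  unfold kY
  simp_rw [Fintype.sum_prod_type, Finset.mul_sum]
  rw [Finset.sum_comm]
  refine Finset.sum_congr rfl fun j _ => Finset.sum_congr rfl fun L _ => ?_
  have : ∀ x, w1 p L * (alg t (toH l) j * epsGreedy N ε j x) * G L j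
    = (w1 p L * alg t (toH l) j * G L j) * epsGreedy N ε j x := fun x => by ring
  simp_rw [this, ← Finset.mul_sum, eps_sum]
  ring

lemma kY_sum (halg : ∀ t l, (∀ i, 0 ≤ alg t l i) ∧ ∑ i, alg t l i = 1)
    (t : ℕ) (l : List (ZZ N)) : ∑ y, kY alg ε p t l y = 1 := by
  have := kY_mean alg ε p halg (fun _ _ => 1) t l
  simpa [w1_sum, (halg _ _).2] using this

lemma kZ_push (t : ℕ) (l : List (ZZ N)) (z : ZZ N) :
    ∑ y with obs y = z, kY alg ε p t l y = kZ alg ε p t l z := by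
  obtain ⟨j, x, b⟩ := z
  unfold kZ kY
  simp only
  rw [← w1_marg, Finset.sum_mul]
  symm
  refine Finset.sum_bij (fun L _ => (L, (j, x))) ?_ ?_ ?_ ?_
  · intro L hL
    simpa [obs] using hL
  · intro a _ b _ h
    simpa using h
  · rintro ⟨L, j', x'⟩ hy
    simp [obs] at hy
    obtain ⟨rfl, rfl, h⟩ := hy
    exact ⟨L, by simpa using h, rfl⟩
  · intro L _
    rfl

lemma kZ_sum (halg : ∀ t l, (∀ i, 0 ≤ alg t l i) ∧ ∑ i, alg t l i = 1)
    (t : ℕ) (l : List (ZZ N)) : ∑ z, kZ alg ε p t l z = 1 := by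
  simp_rw [← kZ_push]
  rw [Finset.sum_fiberwise, kY_sum _ _ _ halg]

/-- log-likelihood ratio -/
def llr (Δ : ℝ) (i : Fin N) (z : ZZ N) : ℝ :=
  if z.2.1 = i then (if z.2.2 then Real.log (1 - 2*Δ) else Real.log (1 + 2*Δ)) else 0

lemma kZ_llr {Δ : ℝ} (h0 : 0 ≤ Δ) (h1 : Δ < 1/2) (i : Fin N) (t : ℕ) (l : List (ZZ N)) (z : ZZ N) :
    kZ alg ε (pI Δ i) t l z = kZ alg ε (fun _ => 1/2) t l z * Real.exp (llr Δ i z) := by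
  obtain ⟨j, x, b⟩ := z
  unfold kZ llr rho pI
  by_cases h : x = i
  · cases b
    · simp [h]; rw [Real.exp_log (by linarith)]; ring
    · simp [h]; rw [Real.exp_log (by linarith)]; ring
  · cases b <;> simp [h]

lemma traj_llr {Δ : ℝ} (h0 : 0 ≤ Δ) (h1 : Δ < 1/2) (i : Fin N) {T : ℕ} (z : Fin T → ZZ N) :
    traj (kZ alg ε (pI Δ i)) id z
      = traj (kZ alg ε (fun _ => 1/2)) id z * Real.exp (∑ t, llr Δ i (z t)) := by
  unfold traj
  simp_rw [kZ_llr alg ε h0 h1 i, Finset.prod_mul_distrib, Real.exp_sum]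

/-- per-observation divergence -/
def klD (Δ : ℝ) : ℝ := -(1/2) * (Real.log (1 - 2*Δ) + Real.log (1 + 2*Δ))

lemma kZ_llr_mean (Δ : ℝ) (i : Fin N) (t : ℕ) (l : List (ZZ N)) :
    ∑ z, kZ alg ε (fun _ => 1/2) t l z * (llr Δ i z + klD Δ * if z.2.1 = i then 1 else 0) = 0 := by
  simp_rw [Fintype.sum_prod_type]
  refine Finset.sum_eq_zero fun j _ => Finset.sum_eq_zero fun x _ => ?_
  unfold kZ llr klD rho
  by_cases h : x = i
  · simp [h]; ring
  · simp [h]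

lemma envi (halg : ∀ t l, (∀ i, 0 ≤ alg t l i) ∧ ∑ i, alg t l i = 1)
    (hε : ε ∈ Set.Icc (0 : ℝ) 1) {Δ : ℝ} (h0 : 0 ≤ Δ) (h1 : Δ < 1/2) (i : Fin N) {T : ℕ}
    (hT : 0 < T) :
    ∑ z : Fin T → ZZ N, traj (kZ alg ε (pI Δ i)) id z * ∑ t, (if (z t).1 = i then (1:ℝ) else 0)
    ≤ ∑ z : Fin T → ZZ N, traj (kZ alg ε (fun _ => 1/2)) id z *
        ∑ t, (if (z t).1 = i then (1:ℝ) else 0)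
      + T * klD Δ * ∑ z : Fin T → ZZ N, traj (kZ alg ε (fun _ => 1/2)) id z *
        ∑ t, (if (z t).2.1 = i then (1:ℝ) else 0) + T / 8 := by
  have hT' : (0:ℝ) < T := by exact_mod_cast hT
  set P : (Fin T → ZZ N) → ℝ := fun z => traj (kZ alg ε (fun _ => 1/2)) id z with hP
  have hPn : ∀ z, 0 ≤ P z := by
    intro z
    refine Finset.prod_nonneg fun t _ => ?_
    refine mul_nonneg ?_ (mul_nonneg ((halg _ _).1 _) (eps_nonneg hε _ _))
    unfold rho; split_ifs <;> norm_num
  have hP1 : ∑ z, P z = 1 := traj_sum _ _ (kZ_sum alg ε _ halg) T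
  have hq1 : ∑ z : Fin T → ZZ N, traj (kZ alg ε (pI Δ i)) id z = 1 :=
    traj_sum _ _ (kZ_sum alg ε _ halg) T
  simp_rw [traj_llr alg ε h0 h1 i] at hq1 ⊢
  have hm := traj_mean _ id (kZ_sum alg ε (fun _ => 1/2) halg) _ (kZ_llr_mean alg ε Δ i) T
  simp_rw [Finset.sum_add_distrib, ← Finset.mul_sum, mul_add, Finset.sum_add_distrib] at hm
  have hc := change P hPn hP1 (fun z => ∑ t, llr Δ i (z t))
    (fun z => (∑ t, (if (z t).1 = i then (1:ℝ) else 0)) / T) hq1 (by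
      intro z
      constructor
      · refine div_nonneg (Finset.sum_nonneg fun t _ => ?_) hT'.le
        split_ifs <;> norm_num
      · rw [div_le_one hT']
        calc _ ≤ ∑ t : Fin T, (1:ℝ) := Finset.sum_le_sum fun t _ => by split_ifs <;> norm_num
          _ = T := by simp)
  simp_rw [← mul_div_assoc, ← Finset.sum_div] at hc
  have hO : ∑ z, P z * (klD Δ * ∑ t, (if (z t).2.1 = i then (1:ℝ) else 0))
    = klD Δ * ∑ z, P z * ∑ t, (if (z t).2.1 = i then (1:ℝ) else 0) := by
    rw [Finset.mul_sum]; exact Finset.sum_congr rfl fun z _ => by ring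
  rw [hO] at hm
  have := mul_le_mul_of_nonneg_right hc hT'.le
  rw [div_mul_cancel₀ _ hT'.ne', add_mul, sub_mul, div_mul_cancel₀ _ hT'.ne'] at this
  have h9 : ∑ z, P z * ∑ t, llr Δ i (z t) =
    - (klD Δ * ∑ z, P z * ∑ t, (if (z t).2.1 = i then (1:ℝ) else 0)) := by linarith
  rw [h9] at this
  simp only [hP] at this ⊢
  linarith

lemma exists_env (halg : ∀ t l, (∀ i, 0 ≤ alg t l i) ∧ ∑ i, alg t l i = 1) (hN : 2 ≤ N)
    (hε : ε ∈ Set.Icc (0 : ℝ) 1) {Δ : ℝ} (h0 : 0 ≤ Δ) (h1 : Δ < 1/2) {T : ℕ}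
    (hT : 0 < T) (hk : klD Δ * T ≤ N / 8) :
    ∃ i, ∑ z : Fin T → ZZ N, traj (kZ alg ε (pI Δ i)) id z *
        ∑ t, (if (z t).1 = i then (1:ℝ) else 0) ≤ 3 / 4 * T := by
  have hT' : (0:ℝ) < T := by exact_mod_cast hT
  have hN' : (2:ℝ) ≤ N := by exact_mod_cast hN
  by_contra! hcon
  have hs := Finset.sum_lt_sum_of_nonempty (s := (univ : Finset (Fin N))) univ_nonempty
    (fun i _ => hcon i)
  have hs2 := Finset.sum_le_sum (s := (univ : Finset (Fin N)))
    (fun i _ => envi alg ε halg hε h0 h1 i hT)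
  have hP1 : ∑ z : Fin T → ZZ N, traj (kZ alg ε (fun _ => 1/2)) id z = 1 :=
    traj_sum _ _ (kZ_sum alg ε _ halg) T
  have key : ∀ c : ZZ N → Fin N, ∑ i, ∑ z : Fin T → ZZ N, traj (kZ alg ε (fun _ => 1/2)) id z *
        ∑ t, (if c (z t) = i then (1:ℝ) else 0) = T := by
    intro c
    rw [Finset.sum_comm]
    simp_rw [← Finset.mul_sum]
    have : ∀ z : Fin T → ZZ N, ∑ i, ∑ t, (if c (z t) = i then (1:ℝ) else 0) = T := by
      intro z
      rw [Finset.sum_comm]; simp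
    simp_rw [this, ← Finset.sum_mul, hP1, one_mul]
  simp_rw [Finset.sum_add_distrib, ← Finset.mul_sum] at hs2
  rw [key (fun z => z.1), key (fun z => z.2.1)] at hs2
  simp at hs hs2
  have : T * klD Δ * T ≤ T * (N / 8) := by
    rw [mul_assoc]; gcongr
  nlinarith

lemma alg_cost (halg : ∀ t l, (∀ i, 0 ≤ alg t l i) ∧ ∑ i, alg t l i = 1) (Δ : ℝ) (i : Fin N)
    (T : ℕ) :
    (∑ L : Fin T → Fin N → Bool, (∏ t, w1 (pI Δ i) (L t)) * ∑ h : Fin T → Fin N × Fin N,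
              medProb alg (epsGreedy N ε) L h *
                ∑ t : Fin T, ∑ a, epsGreedy N ε (h t).1 a *
                  (if L t a then (1 : ℝ) else 0))
    = T * (1/2 - Δ * ((1 - ε) / N)) - Δ * ε * ∑ z : Fin T → ZZ N, traj (kZ alg ε (pI Δ i)) id z *
        ∑ t, (if (z t).1 = i then (1:ℝ) else 0) := by
  have hm := traj_mean (kY alg ε (pI Δ i)) obs (kY_sum alg ε _ halg)
    (fun y => ∑ a, epsGreedy N ε y.2.1 a * (if y.1 a then (1 : ℝ) else 0)
       - (1/2 - Δ * ((1 - ε) / N) - Δ * ε * (if y.2.1 = i then 1 else 0))) (by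
      intro t l
      rw [kY_mean alg ε (pI Δ i) halg (fun L j => ∑ a, epsGreedy N ε j a * (if L a then (1 : ℝ) else 0)
       - (1/2 - Δ * ((1 - ε) / N) - Δ * ε * (if j = i then 1 else 0)))]
      refine Finset.sum_eq_zero fun j _ => ?_
      simp_rw [mul_sub (w1 _ _), Finset.sum_sub_distrib, ← Finset.sum_mul]
      rw [w1_loss, w1_sum, eps_cost]
      ring) T
  have hp := traj_push (kY alg ε (pI Δ i)) obs _ (kZ_push alg ε (pI Δ i)) (T := T)
    (fun z => ∑ t, (if (z t).1 = i then (1:ℝ) else 0))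
  have h1 := traj_sum (kY alg ε (pI Δ i)) obs (kY_sum alg ε _ halg) T
  rw [← hp]
  have hL : (∑ L : Fin T → Fin N → Bool, (∏ t, w1 (pI Δ i) (L t)) * ∑ h : Fin T → Fin N × Fin N,
              medProb alg (epsGreedy N ε) L h *
                ∑ t : Fin T, ∑ a, epsGreedy N ε (h t).1 a *
                  (if L t a then (1 : ℝ) else 0))
      = ∑ y, traj (kY alg ε (pI Δ i)) obs y *
        ∑ t : Fin T, ∑ a, epsGreedy N ε (y t).2.1 a * (if (y t).1 a then (1 : ℝ) else 0) := by
    rw [← (Equiv.arrowProdEquivProdArrow (Fin T) (fun _ => Fin N → Bool)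
      (fun _ => Fin N × Fin N)).symm.sum_comp, Fintype.sum_prod_type]
    refine Finset.sum_congr rfl fun L _ => ?_
    rw [Finset.mul_sum]
    refine Finset.sum_congr rfl fun h _ => ?_
    rw [← mul_assoc]
    congr 1
    unfold traj medProb kY
    rw [← Finset.prod_mul_distrib]
    refine Finset.prod_congr rfl fun t _ => ?_
    have : medHist L h t = toH (List.take t (List.ofFn fun s => obs (L s, h s))) := by
      unfold medHist toH
      rw [List.map_take, List.map_ofFn]
      rfl
    rw [this]
    rfl
  rw [hL]
  simp_rw [Finset.sum_sub_distrib, mul_sub, Finset.sum_sub_distrib] at hm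
  simp only [← Finset.mul_sum, ← Finset.sum_mul, h1] at hm
  have hO : ∑ y : Fin T → (Fin N → Bool) × (Fin N × Fin N), traj (kY alg ε (pI Δ i)) obs y * (Δ * ε * ∑ t, (if (y t).2.1 = i then (1:ℝ) else 0))
    = Δ * ε * ∑ y : Fin T → (Fin N → Bool) × (Fin N × Fin N), traj (kY alg ε (pI Δ i)) obs y * ∑ t, (if (y t).2.1 = i then (1:ℝ) else 0) := by
    rw [Finset.mul_sum]; exact Finset.sum_congr rfl fun z _ => by ring
  rw [hO] at hm
  simp only [Finset.sum_const, Finset.card_univ, Fintype.card_fin, nsmul_eq_mul] at hm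
  refine (sub_eq_zero.1 hm).trans ?_
  change _ = T * (1/2 - Δ * ((1 - ε) / N)) - Δ * ε *
    ∑ y : Fin T → (Fin N → Bool) × (Fin N × Fin N), traj (kY alg ε (pI Δ i)) obs y *
      ∑ t, (if (y t).2.1 = i then (1:ℝ) else 0)
  ring

lemma pol_cost (Δ : ℝ) (i : Fin N) (T : ℕ) :
    ∑ L : Fin T → Fin N → Bool, (∏ t, w1 (pI Δ i) (L t)) *
      ∑ t : Fin T, ∑ a, epsGreedy N ε i a * (if L t a then (1 : ℝ) else 0)
    = T * (1/2 - Δ * ((1 - ε) / N) - Δ * ε) := by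
  have hm := traj_mean (fun _ (_ : List (Fin N → Bool)) => w1 (pI Δ i)) id
    (fun _ _ => w1_sum _)
    (fun l => ∑ a, epsGreedy N ε i a * (if l a then (1 : ℝ) else 0)
      - (1/2 - Δ * ((1 - ε) / N) - Δ * ε)) (by
      intro t l
      simp_rw [mul_sub (w1 _ _), Finset.sum_sub_distrib, ← Finset.sum_mul]
      rw [w1_loss, w1_sum, eps_cost]
      simp) T
  have h1 := traj_sum (fun _ (_ : List (Fin N → Bool)) => w1 (pI Δ i)) id
    (fun _ _ => w1_sum _) T
  unfold traj at hm h1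
  simp_rw [Finset.sum_sub_distrib] at hm
  simp_rw [mul_sub (∏ t : Fin T, _), Finset.sum_sub_distrib, ← Finset.sum_mul] at hm
  rw [h1] at hm
  simp only [Finset.sum_const, Finset.card_univ, Fintype.card_fin, nsmul_eq_mul] at hm
  linarith

end

lemma numerics {N T : ℝ} (hN : 0 < N) (hT : 0 < T) (h : N / T ≤ 4/3) :
    2/9 * Real.sqrt (N / T) < 1/2 ∧ klD (2/9 * Real.sqrt (N / T)) * T ≤ N / 8 := by
  have hs := Real.sq_sqrt (div_pos hN hT).le
  have hs0 := Real.sqrt_nonneg (N / T)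
  set s := Real.sqrt (N / T)
  have hs1 : s ≤ 2 := by nlinarith
  refine ⟨by linarith, ?_⟩
  have hk : klD (2/9 * s) ≤ (N / T) / 8 := by
    unfold klD
    rw [← Real.log_mul (by linarith) (by linarith)]
    have h2 : (1 - 2 * (2 / 9 * s)) * (1 + 2 * (2 / 9 * s)) = 1 - 16/81 * (N/T) := by
      rw [← hs]; ring
    rw [h2]
    have hpos : 0 < N / T := div_pos hN hT
    have : -((N/T)/4) ≤ Real.log (1 - 16/81 * (N/T)) := by
      rw [Real.le_log_iff_exp_le (by linarith)]
      have hq := Real.quadratic_le_exp_of_nonneg (x := (N/T)/4) (by positivity)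
      rw [Real.exp_neg, inv_le_comm₀ (Real.exp_pos _) (by linarith)]
      refine le_trans ?_ hq
      rw [inv_le_iff_one_le_mul₀ (by linarith)]
      nlinarith
    linarith
  calc _ ≤ N / T / 8 * T := by gcongr
    _ = N / 8 := by field_simp

end EG

/-- Mediator-feedback lower bound for the ε-greedy policy set: for any
algorithm and `T ≥ N/(4 log(4/3))`, there is a (stochastic, Boolean-valued) sequence of
losses, given by a distribution `w` over loss sequences, with expected regret at least
`(ε/18)·√(N·T)`. -/
theorem epsGreedy_lower_bound (N : ℕ) [NeZero N] (hN : 2 ≤ N)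
    (ε : ℝ) (hε : ε ∈ Set.Icc (0 : ℝ) 1)
    (T : ℕ) (hT : (N : ℝ) / (4 * Real.log (4 / 3)) ≤ (T : ℝ))
    (alg : ℕ → List (Fin N × Fin N × ℝ) → Fin N → ℝ)
    (halg : ∀ t l, (∀ i, 0 ≤ alg t l i) ∧ ∑ i, alg t l i = 1) :
    ∃ w : (Fin T → Fin N → Bool) → ℝ, (∀ L, 0 ≤ w L) ∧ (∑ L, w L = 1) ∧
      ε / 18 * Real.sqrt (N * T)
        ≤ (∑ L, w L * ∑ h : Fin T → Fin N × Fin N,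
              medProb alg (epsGreedy N ε) L h *
                ∑ t : Fin T, ∑ a, epsGreedy N ε (h t).1 a *
                  (if L t a then (1 : ℝ) else 0))
          - univ.inf' univ_nonempty (fun i : Fin N =>
              ∑ L, w L * ∑ t : Fin T, ∑ a, epsGreedy N ε i a *
                (if L t a then (1 : ℝ) else 0)) := by
  classical
  have hN' : (2:ℝ) ≤ N := by exact_mod_cast hN
  have hc0 : 0 < Real.log (4/3) := Real.log_pos (by norm_num)
  have hc1 : Real.log (4/3) ≤ 1/3 := by
    have := Real.log_le_sub_one_of_pos (x := 4/3) (by norm_num)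
    linarith
  have hT0 : (0:ℝ) < T := lt_of_lt_of_le (by positivity) hT
  have hr : (N:ℝ) / T ≤ 4/3 := by
    rw [div_le_iff₀ (by positivity)] at hT
    rw [div_le_iff₀ hT0]
    nlinarith
  obtain ⟨hΔ1, hk⟩ := EG.numerics (N := N) (T := T) (by linarith) hT0 hr
  have hΔ0 : 0 ≤ 2/9 * Real.sqrt ((N:ℝ) / T) := by positivity
  set Δ := 2/9 * Real.sqrt ((N:ℝ) / T) with hΔ
  obtain ⟨i, hi⟩ := EG.exists_env alg ε halg hN hε hΔ0 hΔ1 (by exact_mod_cast hT0) hk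
  refine ⟨fun L => ∏ t, EG.w1 (EG.pI Δ i) (L t), ?_, ?_, ?_⟩
  · intro L
    refine Finset.prod_nonneg fun t _ => Finset.prod_nonneg fun a _ => ?_
    unfold EG.rho EG.pI
    split_ifs <;> linarith
  · exact EG.traj_sum (fun _ (_ : List (Fin N → Bool)) => EG.w1 (EG.pI Δ i)) id
      (fun _ _ => EG.w1_sum _) T
  · have hinf := Finset.inf'_le (s := univ) (fun j : Fin N =>
              ∑ L : Fin T → Fin N → Bool, (∏ t, EG.w1 (EG.pI Δ i) (L t)) *
                ∑ t : Fin T, ∑ a, epsGreedy N ε j a *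
                (if L t a then (1 : ℝ) else 0)) (Finset.mem_univ i)
    refine le_trans ?_ (sub_le_sub_left hinf _)
    rw [EG.alg_cost alg ε halg, EG.pol_cost]
    have hsq : Real.sqrt (N * T) = Real.sqrt ((N:ℝ) / T) * T := by
      have : (N:ℝ) * T = N / T * T ^ 2 := by field_simp
      rw [this, Real.sqrt_mul (by positivity), Real.sqrt_sq hT0.le]
    have hm := mul_le_mul_of_nonneg_left hi (mul_nonneg hΔ0 hε.1)
    have : ε / 18 * Real.sqrt (N * T) = Δ * ε * T - Δ * ε * (3/4 * T) := by
      rw [hsq, hΔ]; ring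
    rw [this]
    linarith

end
end

section
/- Consider the linear bandit problem with action set the ε-greedy policy set (ε > 0) embedded in the simplex, where losses of outcomes are ℓ_t(x) = μ(x) + Z_t with Z_t i.i.d. N(0, σ²), and the learner observes ⟨ϑ_t, μ⟩ + Z_t. Then for any algorithm and T ≥ σ²N/ε², there is an environment μ with sup_μ Reg(μ) ≥ (σ/8)√(NT), independent of ε. -/
open Finset MeasureTheory ProbabilityTheory

noncomputable section

/-- The history available before round `t` under linear bandit feedback: the actions
played and the observed losses `⟨θ_{a s}, μ⟩ + z s`, where `z` is the common Gaussian
noise sequence. -/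
def linHist {N : ℕ} {T : ℕ} (θ : Fin N → Fin N → ℝ) (μ : Fin N → ℝ)
    (a : Fin T → Fin N) (z : Fin T → ℝ) (t : ℕ) : List (Fin N × ℝ) :=
  (List.ofFn fun s : Fin T => (a s, (∑ x, θ (a s) x * μ x) + z s)).take t

theorem lb_marg {α : Type*} [Fintype α] (p : ∀ t : ℕ, (Fin t → α) → α → ℝ)
    (hp : ∀ t h, ∑ x, p t h x = 1) (n d : ℕ) (g : (Fin n → α) → ℝ) :
    ∑ a : Fin (n + d) → α, (∏ t : Fin (n + d), p t (fun r : Fin t => a ⟨r, r.2.trans t.2⟩) (a t)) *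
      g (fun r => a ⟨r, by omega⟩)
    = ∑ a : Fin n → α, (∏ t : Fin n, p t (fun r : Fin t => a ⟨r, r.2.trans t.2⟩) (a t)) * g a := by
  induction d with
  | zero => rfl
  | succ d ih =>
    rw [← ih]
    have e := (Fin.snocEquiv (fun _ : Fin (n + d + 1) => α)).sum_comp
      (fun a : Fin (n + d + 1) → α => (∏ t : Fin (n + d + 1), p t (fun r : Fin t => a ⟨r, r.2.trans t.2⟩) (a t)) *
      g (fun r => a ⟨r, by omega⟩))
    refine e.symm.trans ?_
    rw [Fintype.sum_prod_type_right]
    refine Finset.sum_congr rfl fun a _ => ?_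
    have key : ∀ x : α, ∀ r : ℕ, ∀ hr : r < n + d, ∀ hr' : r < n + d + 1,
        (Fin.snocEquiv (fun _ : Fin (n + d + 1) => α)) (x, a) ⟨r, hr'⟩ = a ⟨r, hr⟩ := by
      intro x r hr hr'
      exact Fin.snoc_castSucc (α := fun _ => α) x a ⟨r, hr⟩
    have key2 : ∀ x : α, 
        (Fin.snocEquiv (fun _ : Fin (n + d + 1) => α)) (x, a) (Fin.last _) = x := by
      intro x 
      exact Fin.snoc_last (α := fun _ => α) x a 
    have : ∀ x : α, (∏ t : Fin (n + d + 1), p t (fun r : Fin t => (Fin.snocEquiv (fun _ : Fin (n + d + 1) => α)) (x, a) ⟨r, r.2.trans t.2⟩) ((Fin.snocEquiv (fun _ : Fin (n + d + 1) => α)) (x, a) t)) *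
      g (fun r => (Fin.snocEquiv (fun _ : Fin (n + d + 1) => α)) (x, a) ⟨r, by omega⟩)
      = p (n+d) a x * ((∏ t : Fin (n + d), p t (fun r : Fin t => a ⟨r, r.2.trans t.2⟩) (a t)) *
      g (fun r => a ⟨r, by omega⟩)) := by
      intro x
      rw [Fin.prod_univ_castSucc, key2]
      have h1 : (fun r : Fin n => (Fin.snocEquiv (fun _ : Fin (n + d + 1) => α)) (x, a) ⟨r, by omega⟩) = (fun r : Fin n => a ⟨r, by omega⟩) := by
        funext r; exact key x r _ _
      have h2 : (fun r : Fin (n+d) => (Fin.snocEquiv (fun _ : Fin (n + d + 1) => α)) (x, a) ⟨r, by omega⟩) = a := by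
        funext r; exact key x r _ _
      have h3 : ∀ t : Fin (n+d), p (t.castSucc : Fin (n+d+1)) (fun r : Fin t => (Fin.snocEquiv (fun _ : Fin (n + d + 1) => α)) (x, a) ⟨r, by omega⟩) ((Fin.snocEquiv (fun _ : Fin (n + d + 1) => α)) (x, a) t.castSucc) = p t (fun r : Fin t => a ⟨r, r.2.trans t.2⟩) (a t) := by
        intro t
        have h4 : (fun r : Fin t => (Fin.snocEquiv (fun _ : Fin (n + d + 1) => α)) (x, a) ⟨r, by omega⟩) = (fun r : Fin t => a ⟨r, r.2.trans t.2⟩) := by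
          funext r; exact key x r _ _
        rw [h4]
        congr 1
        exact key x t t.2 _
      rw [h1]
      have hlast : p (Fin.last (n+d) : Fin (n+d+1)) (fun r => (Fin.snocEquiv (fun _ : Fin (n + d + 1) => α)) (x, a) ⟨r, r.2.trans (Fin.last (n+d)).2⟩) x = p (n+d) a x :=
        congrArg (fun h => p (n+d) h x) h2
      exact (congrArg₂ (· * ·) (congrArg₂ (· * ·) (Finset.prod_congr rfl (fun t _ => h3 t)) hlast) rfl).trans (by ring)
    rw [Finset.sum_congr rfl (fun x _ => this x), ← Finset.sum_mul, hp, one_mul]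

theorem lb_hoeff {ι : Type*} [Fintype ι] (p X : ι → ℝ) (hp : ∀ i, 0 ≤ p i) (hs : ∑ i, p i = 1)
    (hX : ∀ i, 0 ≤ X i ∧ X i ≤ 1) :
    ∑ i, p i * Real.exp (-X i) ≤ Real.exp (-(∑ i, p i * X i) + 1/8) := by
  let _ : MeasurableSpace ι := ⊤
  let P : Measure ι := ∑ i, ENNReal.ofReal (p i) • Measure.dirac i
  have hP : IsProbabilityMeasure P := ⟨by
    simp only [P, Measure.coe_finsetSum, Finset.sum_apply, Measure.smul_apply, measure_univ, smul_eq_mul, mul_one]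
    rw [← ENNReal.ofReal_sum_of_nonneg (fun i _ => hp i), hs, ENNReal.ofReal_one]⟩
  have hint : ∀ f : ι → ℝ, ∫ i, f i ∂P = ∑ i, p i * f i := by
    intro f
    simp only [P]
    rw [integral_finsetSum_measure]
    · refine Finset.sum_congr rfl fun i _ => ?_
      rw [integral_smul_measure, integral_dirac, ENNReal.toReal_ofReal (hp i), smul_eq_mul]
    · intro i _
      exact (integrable_dirac (by simp)).smul_measure (by simp)
  have h := (hasSubgaussianMGF_of_mem_Icc (μ := P) (X := X) (a := 0) (b := 1)
    (measurable_of_finite X).aemeasurable (by exact Filter.Eventually.of_forall fun i => ⟨(hX i).1, (hX i).2⟩)).mgf_le (-1)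
  rw [mgf, hint, hint] at h
  have h2 : ∀ i, p i * Real.exp (-1 * (X i - ∑ j, p j * X j)) = Real.exp (∑ j, p j * X j) * (p i * Real.exp (-X i)) := by
    intro i
    rw [mul_left_comm, ← Real.exp_add]; congr 2; ring
  simp only [h2] at h
  rw [← Finset.mul_sum] at h
  have h3 : Real.exp (-(∑ i, p i * X i) + 1/8) = Real.exp (-(∑ i, p i * X i)) * Real.exp (1/8) := Real.exp_add _ _
  rw [h3]
  have h4 := mul_le_mul_of_nonneg_left h (Real.exp_pos (-(∑ i, p i * X i))).le
  rw [← mul_assoc, ← Real.exp_add] at h4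
  norm_num at h4 ⊢
  exact h4

theorem lb_gauss1 (c : ℝ) (v : NNReal) (hv : v ≠ 0) :
    gaussianReal c v = (gaussianReal 0 v).withDensity
      (fun x => ENNReal.ofReal (Real.exp (c * x / v - c ^ 2 / (2 * v)))) := by
  rw [gaussianReal_of_var_ne_zero _ hv, gaussianReal_of_var_ne_zero _ hv,
    ← withDensity_mul _ (measurable_gaussianPDF _ _) (by fun_prop)]
  congr 1
  funext x
  simp only [Pi.mul_apply, gaussianPDF, gaussianPDFReal]
  rw [← ENNReal.ofReal_mul (by positivity), mul_assoc (√_)⁻¹, ← Real.exp_add]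
  congr 3
  have : (v : ℝ) ≠ 0 := by exact_mod_cast hv
  field_simp
  ring

theorem lb_gauss {T : ℕ} (c : Fin T → ℝ) (v : NNReal) (hv : v ≠ 0) :
    (Measure.pi fun t => gaussianReal (c t) v) = (Measure.pi fun _ : Fin T => gaussianReal 0 v).withDensity
      (fun w => ENNReal.ofReal (Real.exp (∑ t, (c t * w t / v - c t ^ 2 / (2 * v))))) := by
  apply Measure.pi_eq
  intro s hs
  have hbox : MeasurableSet (Set.univ.pi s) := MeasurableSet.univ_pi hs
  rw [withDensity_apply _ hbox, ← lintegral_indicator hbox]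
  let f : Fin T → ℝ → ENNReal := fun t => (s t).indicator
    (fun x => ENNReal.ofReal (Real.exp (c t * x / v - c t ^ 2 / (2 * v))))
  have hf : ∀ t, Measurable (f t) := fun t => Measurable.indicator (by fun_prop) (hs t)
  have hprod : ((Set.univ.pi s).indicator (fun w : Fin T → ℝ => ENNReal.ofReal (Real.exp (∑ t, (c t * w t / v - c t ^ 2 / (2 * v)))))) = fun w => ∏ t, f t (w t) := by
    funext w
    by_cases hw : w ∈ Set.univ.pi s
    · rw [Set.indicator_of_mem hw, Real.exp_sum, ENNReal.ofReal_prod_of_nonneg (fun _ _ => (Real.exp_pos _).le)]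
      refine Finset.prod_congr rfl fun t _ => ?_
      simp only [f]
      rw [Set.indicator_of_mem (hw t trivial)]
    · rw [Set.indicator_of_notMem hw]
      have : ∃ t, w t ∉ s t := by simpa [Set.mem_pi] using hw
      obtain ⟨t, ht⟩ := this
      symm
      exact Finset.prod_eq_zero (Finset.mem_univ t) (Set.indicator_of_notMem ht _)
  rw [hprod]
  have hind := iIndepFun_pi (μ := fun _ : Fin T => gaussianReal 0 v) (X := f) (fun t => (hf t).aemeasurable)
  have := lintegral_prod_eq_prod_lintegral_of_indepFun (μ := Measure.pi fun _ : Fin T => gaussianReal 0 v) Finset.univ (fun t w => f t (w t)) hind (fun t => (hf t).comp (measurable_pi_apply t))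
  rw [this]
  refine Finset.prod_congr rfl fun t _ => ?_
  rw [(measurePreserving_eval (fun _ : Fin T => gaussianReal 0 v) t).lintegral_comp (hf t), lintegral_indicator (hs t),
    ← withDensity_apply _ (hs t), ← lb_gauss1 _ _ hv]

theorem lb_shift {T : ℕ} (c : Fin T → ℝ) (v : NNReal) (hv : v ≠ 0) :
    (Measure.pi fun _ : Fin T => gaussianReal 0 v).map (fun w t => w t + c t) = (Measure.pi fun _ : Fin T => gaussianReal 0 v).withDensity
      (fun w => ENNReal.ofReal (Real.exp (∑ t, (c t * w t / v - c t ^ 2 / (2 * v))))) := by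
  rw [← lb_gauss c v hv]
  refine (measurePreserving_pi (fun _ : Fin T => gaussianReal 0 v) (fun t => gaussianReal (c t) v) (f := fun t x => x + c t) (fun t => ⟨by fun_prop, ?_⟩)).map_eq
  rw [gaussianReal_map_add_const, zero_add]

theorem lb_core {T N : ℕ} (v : NNReal) (hv : v ≠ 0) (δ : ℝ) (hT : 0 < T) (k : Fin N)
    (W : (Fin T → Fin N) → (Fin T → ℝ) → ℝ) (hWm : ∀ a, Measurable (W a))
    (hW0 : ∀ a w, 0 ≤ W a w) (hW1 : ∀ a w, W a w ≤ 1) (p q cnt : (Fin T → Fin N) → ℝ)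
    (hcnt : ∀ a, cnt a = ∑ t, if a t = k then (1 : ℝ) else 0)
    (hq : ∀ a, q a = ∫ w, W a w ∂(Measure.pi fun _ : Fin T => gaussianReal 0 v))
    (hp : ∀ a, p a = ∫ w, W a (fun t => w t + -δ * (if a t = k then (1 : ℝ) else 0))
      ∂(Measure.pi fun _ : Fin T => gaussianReal 0 v))
    (hq1 : ∑ a, q a = 1) (hp1 : ∑ a, p a = 1)
    (hz : ∀ t, ∑ a, ∫ w, W a w * ((if a t = k then (1 : ℝ) else 0) * w t)
      ∂(Measure.pi fun _ : Fin T => gaussianReal 0 v) = 0) :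
    ∑ a, p a * (cnt a / T) ≤ ∑ a, q a * (cnt a / T)
      + δ ^ 2 / (2 * v) * ∑ a, q a * cnt a + 1 / 8 := by
  set γ := Measure.pi fun _ : Fin T => gaussianReal 0 v with hγ
  have hTr : (0 : ℝ) < T := by exact_mod_cast hT
  have hX : ∀ a, 0 ≤ cnt a / T ∧ cnt a / T ≤ 1 := by
    intro a
    have h0 : 0 ≤ cnt a := by
      rw [hcnt]; exact Finset.sum_nonneg fun t _ => by split_ifs <;> norm_num
    have h1 : cnt a ≤ T := by
      rw [hcnt]
      calc _ ≤ ∑ t : Fin T, (1 : ℝ) := Finset.sum_le_sum fun t _ => by split_ifs <;> norm_num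
        _ = T := by simp
    exact ⟨by positivity, by rw [div_le_one hTr]; exact h1⟩
  have hp0 : ∀ a, 0 ≤ p a := fun a => by rw [hp]; exact integral_nonneg fun w => hW0 _ _
  have hoe := lb_hoeff p (fun a => cnt a / T) hp0 hp1 hX
  let c : (Fin T → Fin N) → Fin T → ℝ := fun a t => -δ * (if a t = k then (1 : ℝ) else 0)
  let ℓ : (Fin T → Fin N) → (Fin T → ℝ) → ℝ := fun a w => ∑ t, (c a t * w t / v - c a t ^ 2 / (2 * v))
  have hℓm : ∀ a, Measurable (ℓ a) := fun a => by fun_prop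
  have hℓ : ∀ a w, ℓ a w = - (δ / v) * (∑ t, (if a t = k then (1 : ℝ) else 0) * w t) - δ ^ 2 / (2 * v) * cnt a := by
    intro a w
    rw [hcnt, Finset.mul_sum, Finset.mul_sum, ← Finset.sum_sub_distrib]
    refine Finset.sum_congr rfl fun t _ => ?_
    simp only [c]
    split_ifs <;> ring
  have hWint : ∀ a, Integrable (W a) γ := fun a =>
    Integrable.of_bound (hWm a).aestronglyMeasurable 1
      (Filter.Eventually.of_forall fun w => by rw [Real.norm_eq_abs, abs_of_nonneg (hW0 a w)]; exact hW1 a w)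
  have hmap : ∀ a, γ.map (fun w t => w t + c a t) = γ.withDensity (fun w => ENNReal.ofReal (Real.exp (ℓ a w))) :=
    fun a => lb_shift (c a) v hv
  have hshm : ∀ a, Measurable (fun (w : Fin T → ℝ) t => w t + c a t) := fun a => by fun_prop
  have hdm : ∀ a, Measurable (fun w => ENNReal.ofReal (Real.exp (ℓ a w))) := fun a =>
    ENNReal.measurable_ofReal.comp (Real.measurable_exp.comp (hℓm a))
  have hpe : ∀ a, p a = ∫ w, Real.exp (ℓ a w) * W a w ∂γ := by
    intro a
    rw [hp, ← integral_map (φ := fun (w : Fin T → ℝ) t => w t + c a t) (f := W a) (hshm a).aemeasurable (hWm a).aestronglyMeasurable, hmap,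
      integral_withDensity_eq_integral_toReal_smul (hdm a) (by simp)]
    simp only [ENNReal.toReal_ofReal (Real.exp_pos _).le, smul_eq_mul]
  have hint : ∀ a, Integrable (fun w => Real.exp (ℓ a w) * W a w) γ := by
    intro a
    have h : Integrable (W a) (γ.map (fun w t => w t + c a t)) := by
      have : IsProbabilityMeasure (γ.map (fun w t => w t + c a t)) := Measure.isProbabilityMeasure_map (hshm a).aemeasurable
      exact Integrable.of_bound (hWm a).aestronglyMeasurable 1
        (Filter.Eventually.of_forall fun w => by rw [Real.norm_eq_abs, abs_of_nonneg (hW0 a w)]; exact hW1 a w)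
    rw [hmap, integrable_withDensity_iff_integrable_smul' (hdm a) (by simp)] at h
    simpa only [ENNReal.toReal_ofReal (Real.exp_pos _).le, smul_eq_mul] using h
  have hint2 : ∀ a t, Integrable (fun w => W a w * ((if a t = k then (1 : ℝ) else 0) * w t)) γ := by
    intro a t
    have h1 : Integrable (fun w : Fin T → ℝ => w t) γ :=
      integrable_eval (μ := fun _ : Fin T => gaussianReal 0 v) (i := t) ((memLp_id_gaussianReal 1).integrable (by simp))
    exact (h1.const_mul _).bdd_mul (c := 1) (hWm a).aestronglyMeasurable
      (Filter.Eventually.of_forall fun w => by rw [Real.norm_eq_abs, abs_of_nonneg (hW0 a w)]; exact hW1 a w)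
  let A : ℝ := -(∑ a, q a * (cnt a / T)) - δ ^ 2 / (2 * v) * ∑ a, q a * cnt a
  have hlow : ∀ a, Real.exp A * (q a * (1 - cnt a / T - A - δ ^ 2 / (2 * v) * cnt a)
      - (δ / v) * ∑ t, ∫ w, W a w * ((if a t = k then (1 : ℝ) else 0) * w t) ∂γ)
      ≤ p a * Real.exp (-(cnt a / T)) := by
    intro a
    rw [hpe, ← integral_mul_const, hq, ← integral_finsetSum _ (fun t _ => hint2 a t), ← integral_const_mul,
      ← integral_mul_const, ← integral_sub ((hWint a).mul_const _) ((integrable_finsetSum _ (fun t _ => hint2 a t)).const_mul _),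
      ← integral_const_mul]
    refine integral_mono ((((hWint a).mul_const _).sub ((integrable_finsetSum _ (fun t _ => hint2 a t)).const_mul _)).const_mul _) ((hint a).mul_const _) ?_
    intro w
    have h1 : Real.exp A * (1 + (ℓ a w - cnt a / T - A)) ≤ Real.exp (ℓ a w - cnt a / T) := by
      have := Real.add_one_le_exp (ℓ a w - cnt a / T - A)
      have h2 : Real.exp (ℓ a w - cnt a / T) = Real.exp A * Real.exp (ℓ a w - cnt a / T - A) := by
        rw [← Real.exp_add]; congr 1; ring
      rw [h2]
      exact mul_le_mul_of_nonneg_left (by linarith) (Real.exp_pos _).le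
    have h3 := mul_le_mul_of_nonneg_left h1 (hW0 a w)
    have h4 : Real.exp (ℓ a w - cnt a / T) = Real.exp (ℓ a w) * Real.exp (-(cnt a / T)) := by
      rw [← Real.exp_add]; rfl
    rw [h4, hℓ] at h3
    simp only [← Finset.mul_sum]
    rw [hℓ]
    refine le_trans (le_of_eq ?_) (h3.trans (le_of_eq ?_)) <;> ring
  have hsum := Finset.sum_le_sum (s := Finset.univ) (fun a _ => hlow a)
  rw [← Finset.mul_sum, Finset.sum_sub_distrib, ← Finset.mul_sum, Finset.sum_comm, Finset.sum_congr rfl (fun t _ => hz t)] at hsum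
  have hA : ∑ a, q a * (1 - cnt a / T - A - δ ^ 2 / (2 * v) * cnt a) = 1 := by
    have : ∀ a, q a * (1 - cnt a / T - A - δ ^ 2 / (2 * v) * cnt a)
      = (1 - A) * q a - q a * (cnt a / T) - δ ^ 2 / (2 * v) * (q a * cnt a) := fun a => by ring
    simp only [this]
    rw [Finset.sum_sub_distrib, Finset.sum_sub_distrib, ← Finset.mul_sum, ← Finset.mul_sum, hq1]
    simp only [A]; ring
  rw [hA] at hsum
  simp only [Finset.sum_const_zero, mul_zero, sub_zero, mul_one] at hsum
  have := Real.exp_le_exp.mp (hsum.trans hoe)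
  simp only [A] at this
  linarith

theorem lb_marg' {α : Type*} [Fintype α] (p : ∀ t : ℕ, (Fin t → α) → α → ℝ)
    (hp : ∀ t h, ∑ x, p t h x = 1) (n T : ℕ) (hn : n ≤ T) (g : (Fin n → α) → ℝ) :
    ∑ a : Fin T → α, (∏ t : Fin T, p t (fun r : Fin t => a ⟨r, r.2.trans t.2⟩) (a t)) *
      g (fun r => a ⟨r, r.2.trans_le hn⟩)
    = ∑ a : Fin n → α, (∏ t : Fin n, p t (fun r : Fin t => a ⟨r, r.2.trans t.2⟩) (a t)) * g a := by
  obtain ⟨d, rfl⟩ := Nat.exists_eq_add_of_le hn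
  exact lb_marg p hp n d g

theorem lb_take {β : Type*} {T : ℕ} (F : Fin T → β) (t : Fin T) :
    (List.ofFn F).take t = List.ofFn (fun r : Fin t => F ⟨r, r.2.trans t.2⟩) := by
  apply List.ext_getElem
  · simp
  · intro i h1 h2
    simp

theorem lb_sum_one {N T : ℕ} (alg : ℕ → List (Fin N × ℝ) → Fin N → ℝ)
    (halg : ∀ t l, ∑ i, alg t l i = 1) (θ : Fin N → Fin N → ℝ) (μ : Fin N → ℝ) (z : Fin T → ℝ) :
    ∑ a : Fin T → Fin N, ∏ t : Fin T, alg t (linHist θ μ a z t) (a t) = 1 := by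
  let w : ℕ → ℝ := fun r => if h : r < T then z ⟨r, h⟩ else 0
  have h := lb_marg' (fun t (h : Fin t → Fin N) x => alg t (List.ofFn fun r : Fin t => (h r, (∑ x, θ (h r) x * μ x) + w r)) x)
    (fun t h => halg _ _) 0 T (Nat.zero_le _) (fun _ => 1)
  simp only [mul_one, Finset.univ_eq_empty, Finset.prod_empty, Finset.sum_const, Finset.card_univ] at h
  simp only [Fintype.card_pi, Finset.univ_eq_empty, Finset.prod_empty, one_smul] at h
  rw [← h]
  refine Finset.sum_congr rfl fun a _ => Finset.prod_congr rfl fun t _ => ?_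
  rw [linHist, lb_take]
  congr 2
  congr 1
  funext r
  have : (r : ℕ) < T := r.2.trans t.2
  simp [w, this]

theorem lb_causal {N T : ℕ} (alg : ℕ → List (Fin N × ℝ) → Fin N → ℝ)
    (halg : ∀ t l, ∑ i, alg t l i = 1) (θ : Fin N → Fin N → ℝ) (μ : Fin N → ℝ) (z z' : Fin T → ℝ)
    (t : Fin T) (hzz : ∀ s < t, z s = z' s) (g : Fin N → ℝ) :
    ∑ a : Fin T → Fin N, (∏ t : Fin T, alg t (linHist θ μ a z t) (a t)) * g (a t) =
    ∑ a : Fin T → Fin N, (∏ t : Fin T, alg t (linHist θ μ a z' t) (a t)) * g (a t) := by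
  have key : ∀ z : Fin T → ℝ, ∑ a : Fin T → Fin N, (∏ t : Fin T, alg t (linHist θ μ a z t) (a t)) * g (a t)
    = ∑ a : Fin (t + 1) → Fin N, (∏ s : Fin (t + 1), alg s (List.ofFn fun r : Fin s =>
      (a ⟨r, r.2.trans s.2⟩, (∑ x, θ (a ⟨r, r.2.trans s.2⟩) x * μ x) + z ⟨r, by omega⟩)) (a s)) * g (a (Fin.last _)) := by
    intro z
    let w : ℕ → ℝ := fun r => if h : r < T then z ⟨r, h⟩ else 0
    have h := lb_marg' (fun t (h : Fin t → Fin N) x => alg t (List.ofFn fun r : Fin t => (h r, (∑ x, θ (h r) x * μ x) + w r)) x)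
      (fun t h => halg _ _) (t + 1) T t.2 (fun a => g (a (Fin.last _)))
    refine Eq.trans ?_ (h.trans ?_)
    · refine Finset.sum_congr rfl fun a _ => ?_
      congr 1
      refine Finset.prod_congr rfl fun t _ => ?_
      rw [linHist, lb_take]
      congr 2
      congr 1
      funext r
      have : (r : ℕ) < T := r.2.trans t.2
      simp [w, this]
    · refine Finset.sum_congr rfl fun a _ => ?_
      congr 1
      refine Finset.prod_congr rfl fun s _ => ?_
      congr 2
      congr 1
      funext r
      have : (r : ℕ) < T := by omega
      simp [w, this]
  rw [key, key]
  refine Finset.sum_congr rfl fun a _ => ?_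
  congr 1
  refine Finset.prod_congr rfl fun s _ => ?_
  congr 2
  congr 1
  funext r
  rw [hzz ⟨r, by omega⟩ (by rw [Fin.lt_def]; simp only; omega)]

theorem lb_zero {T : ℕ} (v : NNReal) (t : Fin T) (G : (Fin T → ℝ) → ℝ) (hG : Measurable G)
    (hc : ∀ z z', (∀ s < t, z s = z' s) → G z = G z') :
    ∫ w, G w * w t ∂(Measure.pi fun _ : Fin T => gaussianReal 0 v) = 0 := by
  set γ := Measure.pi fun _ : Fin T => gaussianReal 0 v with hγ
  have hmp : MeasurePreserving (fun (w : Fin T → ℝ) s => if s = t then -w s else w s) γ γ := by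
    refine measurePreserving_pi (fun _ : Fin T => gaussianReal 0 v) (fun _ => gaussianReal 0 v)
      (f := fun s x => if s = t then -x else x) (fun s => ?_)
    by_cases hs : s = t
    · simp only [hs, if_true]
      exact ⟨by fun_prop, by rw [gaussianReal_map_neg, neg_zero]⟩
    · simp only [hs, if_false]
      exact MeasurePreserving.id _
  have h1 := integral_map (μ := γ) (f := fun w => G w * w t) hmp.measurable.aemeasurable
    (hG.mul (measurable_pi_apply t)).aestronglyMeasurable
  rw [hmp.map_eq] at h1
  have h2 : ∀ w : Fin T → ℝ, G (fun s => if s = t then -w s else w s) = G w := by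
    intro w
    apply hc
    intro s hs
    simp [hs.ne]
  simp only [h2, if_true, mul_neg, integral_neg] at h1
  linarith

/-- Linear bandit lower bound for the ε-greedy action set.  Losses are
`ℓ_t(x) = μ x + Z_t` with `Z_t` i.i.d. `N(0,σ²)` noise common to all outcomes, and the
learner observes only `⟨ϑ_t, μ⟩ + Z_t`.  For any (measurable) algorithm and
`T ≥ σ²N/ε²`, there is an environment `μ ∈ [0,1]^N` whose expected regret is at least
`(σ/8)·√(N·T)` — independently of `ε`. -/
theorem linear_bandit_lower_bound (N : ℕ) [NeZero N] (hN : 2 ≤ N)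
    (ε : ℝ) (hε : 0 < ε) (hε1 : ε ≤ 1)
    (σ : NNReal) (hσ : 0 < σ)
    (T : ℕ) (hT : (σ : ℝ) ^ 2 * N / ε ^ 2 ≤ (T : ℝ))
    (alg : ℕ → List (Fin N × ℝ) → Fin N → ℝ)
    (halg : ∀ t l, (∀ i, 0 ≤ alg t l i) ∧ ∑ i, alg t l i = 1)
    (hmeas : ∀ (μ : Fin N → ℝ) (a : Fin T → Fin N),
      Measurable fun z : Fin T → ℝ =>
        ∏ t : Fin T, alg t (linHist (epsGreedy N ε) μ a z t) (a t)) :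
    ∃ μ : Fin N → ℝ, (∀ x, 0 ≤ μ x ∧ μ x ≤ 1) ∧
      (σ : ℝ) / 8 * Real.sqrt (N * T)
        ≤ (∫ z : Fin T → ℝ,
              (∑ a : Fin T → Fin N,
                (∏ t : Fin T, alg t (linHist (epsGreedy N ε) μ a z t) (a t)) *
                  ∑ t : Fin T, ∑ x, epsGreedy N ε (a t) x * μ x)
              ∂(Measure.pi fun _ : Fin T => gaussianReal 0 (σ ^ 2)))
          - univ.inf' univ_nonempty (fun i : Fin N =>
              (T : ℝ) * ∑ x, epsGreedy N ε i x * μ x) := by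
  have hNr : (0 : ℝ) < N := by exact_mod_cast (by omega : 0 < N)
  have hσr : (0 : ℝ) < σ := by exact_mod_cast hσ
  have hTr : (0 : ℝ) < T := lt_of_lt_of_le (by positivity) hT
  have hTn : 0 < T := by exact_mod_cast hTr
  have hv : σ ^ 2 ≠ 0 := by positivity
  set δ : ℝ := σ * Real.sqrt (N / T) / 2 with hδ
  have hδ0 : 0 < δ := by positivity
  have hδ2 : δ ^ 2 = σ ^ 2 * N / (4 * T) := by
    rw [hδ, div_pow, mul_pow, Real.sq_sqrt (by positivity)]; field_simp; norm_num
  have hδε : δ ≤ ε := by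
    apply le_of_sq_le_sq _ hε.le
    rw [hδ2, div_le_iff₀ (by positivity)]
    rw [div_le_iff₀ (by positivity)] at hT
    nlinarith [mul_pos hTr (pow_pos hε 2)]
  set Δ : ℝ := δ / ε with hΔ
  have hΔ0 : 0 < Δ := by positivity
  have hΔ1 : Δ ≤ 1 := by rw [hΔ, div_le_one hε]; exact hδε
  have hεΔ : ε * Δ = δ := by rw [hΔ]; field_simp
  set b : ℝ := (1 - ε) / N * ((N - 1) * Δ) + δ with hb
  let μk : Fin N → Fin N → ℝ := fun k x => if x = k then 0 else Δ
  have hmk : ∀ k i, ∑ x, epsGreedy N ε i x * μk k x = b + -δ * (if i = k then (1 : ℝ) else 0) := by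
    intro k i
    have h1 : ∀ x, epsGreedy N ε i x * μk k x = (1 - ε) / N * (Δ - if x = k then Δ else 0)
        + (if x = i then ε * μk k x else 0) := by
      intro x
      simp only [epsGreedy, μk]
      split_ifs <;> ring
    simp only [h1]
    rw [Finset.sum_add_distrib, ← Finset.mul_sum, Finset.sum_sub_distrib, Finset.sum_ite_eq', Finset.sum_ite_eq']
    simp only [Finset.mem_univ, if_true, Finset.sum_const, Finset.card_univ, Fintype.card_fin, nsmul_eq_mul, μk]
    rw [hb]
    split_ifs
    · ring
    · rw [hεΔ]; ring
  have hm0 : ∀ i : Fin N, ∑ x, epsGreedy N ε i x * (fun _ : Fin N => b) x = b := by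
    intro i
    rw [← Finset.sum_mul]
    simp only [epsGreedy]
    rw [Finset.sum_add_distrib, Finset.sum_ite_eq']
    simp only [Finset.mem_univ, if_true, Finset.sum_const, Finset.card_univ, Fintype.card_fin, nsmul_eq_mul]
    field_simp
    ring
  have hs1 : ∀ t l, ∑ i, alg t l i = 1 := fun t l => (halg t l).2
  let W : (Fin T → Fin N) → (Fin T → ℝ) → ℝ := fun a w =>
    ∏ t : Fin T, alg t (linHist (epsGreedy N ε) (fun _ => b) a w t) (a t)
  have hWm : ∀ a, Measurable (W a) := fun a => hmeas _ a
  have hW0 : ∀ a w, 0 ≤ W a w := fun a w => Finset.prod_nonneg fun t _ => (halg _ _).1 _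
  have hWs : ∀ w, ∑ a, W a w = 1 := fun w => lb_sum_one alg hs1 _ _ w
  have hW1 : ∀ a w, W a w ≤ 1 := fun a w => by
    rw [← hWs w]; exact Finset.single_le_sum (f := fun a => W a w) (fun a _ => hW0 a w) (Finset.mem_univ a)
  have hWk : ∀ k a w, ∏ t : Fin T, alg t (linHist (epsGreedy N ε) (μk k) a w t) (a t)
      = W a (fun t => w t + -δ * (if a t = k then (1 : ℝ) else 0)) := by
    intro k a w
    simp only [W]
    refine Finset.prod_congr rfl fun t _ => ?_
    congr 1
    simp only [linHist, hmk]
    congr 3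
    funext s
    rw [hm0]
    congr 1
    ring
  set γ := Measure.pi fun _ : Fin T => gaussianReal 0 (σ ^ 2) with hγ
  have hbd : ∀ f : (Fin T → ℝ) → ℝ, Measurable f → (∀ w, 0 ≤ f w) → (∀ w, f w ≤ 1) → Integrable f γ :=
    fun f hf h0 h1 => Integrable.of_bound hf.aestronglyMeasurable 1
      (Filter.Eventually.of_forall fun w => by rw [Real.norm_eq_abs, abs_of_nonneg (h0 w)]; exact h1 w)
  let q : (Fin T → Fin N) → ℝ := fun a => ∫ w, W a w ∂γ
  let p : Fin N → (Fin T → Fin N) → ℝ := fun k a =>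
    ∫ w, W a (fun t => w t + -δ * (if a t = k then (1 : ℝ) else 0)) ∂γ
  let cnt : Fin N → (Fin T → Fin N) → ℝ := fun k a => ∑ t, if a t = k then (1 : ℝ) else 0
  have hpint : ∀ k a, Integrable (fun w => W a (fun t => w t + -δ * (if a t = k then (1 : ℝ) else 0))) γ := by
    intro k a
    refine hbd _ ((hWm a).comp (by fun_prop)) (fun w => hW0 _ _) (fun w => hW1 _ _)
  have hq1 : ∑ a, q a = 1 := by
    simp only [q]
    rw [← integral_finsetSum _ (fun a _ => hbd _ (hWm a) (hW0 a) (hW1 a))]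
    simp [hWs]
  have hp1 : ∀ k, ∑ a, p k a = 1 := by
    intro k
    simp only [p]
    rw [← integral_finsetSum _ (fun a _ => hpint k a)]
    simp only [← hWk]
    simp only [lb_sum_one alg hs1]
    simp
  have hz : ∀ k t, ∑ a, ∫ w, W a w * ((if a t = k then (1 : ℝ) else 0) * w t) ∂γ = 0 := by
    intro k t
    have hint2 : ∀ a : Fin T → Fin N, Integrable (fun w => W a w * ((if a t = k then (1 : ℝ) else 0) * w t)) γ := by
      intro a
      have h1 : Integrable (fun w : Fin T → ℝ => w t) γ :=
        integrable_eval (μ := fun _ : Fin T => gaussianReal 0 (σ ^ 2)) (i := t) ((memLp_id_gaussianReal 1).integrable (by simp))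
      exact (h1.const_mul _).bdd_mul (c := 1) (hWm a).aestronglyMeasurable
        (Filter.Eventually.of_forall fun w => by rw [Real.norm_eq_abs, abs_of_nonneg (hW0 a w)]; exact hW1 a w)
    rw [← integral_finsetSum _ (fun a _ => hint2 a)]
    simp only [← mul_assoc, ← Finset.sum_mul]
    refine lb_zero (σ ^ 2) t (fun w => ∑ a, W a w * (if a t = k then (1 : ℝ) else 0)) ?_ ?_
    · exact Finset.measurable_sum _ fun a _ => (hWm a).mul_const _
    · intro z z' h
      exact lb_causal alg hs1 _ _ z z' t h (fun i => if i = k then (1 : ℝ) else 0)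
  have hcore : ∀ k, ∑ a, p k a * (cnt k a / T) ≤ ∑ a, q a * (cnt k a / T)
      + δ ^ 2 / (2 * (σ ^ 2 : NNReal)) * ∑ a, q a * cnt k a + 1 / 8 := fun k =>
    lb_core (σ ^ 2) hv δ hTn k W hWm hW0 hW1 (p k) q (cnt k) (fun _ => rfl) (fun _ => rfl) (fun _ => rfl)
      hq1 (hp1 k) (hz k)
  have hcore2 : ∀ k, ∑ a, p k a * (cnt k a / T) ≤ (1 / T + 1 / 8 * N / T) * ∑ a, q a * cnt k a + 1 / 8 := by
    intro k
    refine (hcore k).trans (le_of_eq ?_)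
    have h1 : ∑ a, q a * (cnt k a / T) = 1 / T * ∑ a, q a * cnt k a := by
      rw [Finset.mul_sum]; exact Finset.sum_congr rfl fun a _ => by ring
    rw [h1, hδ2]
    push_cast
    field_simp
    ring
  have hcs : ∑ k, ∑ a, q a * cnt k a = T := by
    rw [Finset.sum_comm]
    have : ∀ a, ∑ k, q a * cnt k a = T * q a := by
      intro a
      rw [← Finset.mul_sum]
      simp only [cnt]
      rw [Finset.sum_comm]
      simp [mul_comm]
    simp only [this]
    rw [← Finset.mul_sum, hq1, mul_one]
  have hex : ∃ k ∈ (Finset.univ : Finset (Fin N)), ∑ a, p k a * (cnt k a / T) ≤ 3 / 4 := by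
    apply Finset.exists_le_of_sum_le Finset.univ_nonempty
    refine (Finset.sum_le_sum fun k _ => hcore2 k).trans ?_
    rw [Finset.sum_add_distrib, ← Finset.mul_sum, hcs]
    simp only [Finset.sum_const, Finset.card_univ, Fintype.card_fin, nsmul_eq_mul]
    have h2 : (2 : ℝ) ≤ N := by exact_mod_cast hN
    have : (1 / (T : ℝ) + 1 / 8 * N / T) * T = 1 + N / 8 := by field_simp
    rw [this]
    linarith
  obtain ⟨k, -, hk⟩ := hex
  refine ⟨μk k, fun x => by simp only [μk]; split_ifs <;> constructor <;> linarith, ?_⟩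
  have hI : (∫ z : Fin T → ℝ, (∑ a : Fin T → Fin N,
      (∏ t : Fin T, alg t (linHist (epsGreedy N ε) (μk k) a z t) (a t)) *
        ∑ t : Fin T, ∑ x, epsGreedy N ε (a t) x * μk k x) ∂γ)
      = T * b - δ * T * ∑ a, p k a * (cnt k a / T) := by
    simp only [hWk, hmk]
    rw [integral_finsetSum _ (fun a _ => (hpint k a).mul_const _)]
    simp only [integral_mul_const]
    have : ∀ a : Fin T → Fin N, (∑ t : Fin T, (b + -δ * (if a t = k then (1 : ℝ) else 0))) = T * b - δ * cnt k a := by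
      intro a
      rw [Finset.sum_add_distrib, ← Finset.mul_sum]
      simp only [Finset.sum_const, Finset.card_univ, Fintype.card_fin, nsmul_eq_mul, cnt]
      ring
    simp only [this]
    calc _ = ∑ a, (T * b * p k a - δ * T * (p k a * (cnt k a / T))) := by
          refine Finset.sum_congr rfl fun a _ => ?_
          simp only [p]
          field_simp
      _ = _ := by
          rw [Finset.sum_sub_distrib, ← Finset.mul_sum, ← Finset.mul_sum, hp1, mul_one]
  rw [hI]
  have hinf : univ.inf' univ_nonempty (fun i : Fin N => (T : ℝ) * ∑ x, epsGreedy N ε i x * μk k x) ≤ T * (b - δ) := by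
    refine (Finset.inf'_le _ (Finset.mem_univ k)).trans (le_of_eq ?_)
    rw [hmk, if_pos rfl]; ring
  have hfin : (σ : ℝ) / 8 * Real.sqrt (N * T) = δ * T / 4 := by
    have : Real.sqrt (N * T) = Real.sqrt (N / T) * T := by
      rw [show (N * T : ℝ) = (N / T) * T ^ 2 by field_simp, Real.sqrt_mul (by positivity), Real.sqrt_sq hTr.le]
    rw [this, hδ]; ring
  rw [hfin]
  have := mul_le_mul_of_nonneg_left hk (mul_pos hδ0 hTr).le
  linarith

end
end
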